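/- (Formal interpolating vector field of an exact symplectic family is Hamiltonian with periodic Hamiltonians) Let B ⊆ ℝ^d be a ball and let f_μ : B × ℝ^d → ℝ^d × ℝ^d, for |μ| ≤ μ̄, be a family of maps, jointly analytic in (x,μ), with f₀ the identity, such that each f_μ is a lift of a map of B × 𝕋^d (i.e. f_μ(p, q + e) = f_μ(p,q) + (0,e) for all e ∈ ℤ^d) and each f_μ is exact symplectic: Df_μ(x)ᵀ J Df_μ(x) = J everywhere, and for every smooth curve γ : [0,1] → B × ℝ^d with γ(1) − γ(0) ∈ {0} × ℤ^d the loop action A(γ) = ∫₀¹ p(t)·q'(t) dt satisfies A(f_μ ∘ γ) = A(γ). Let (g_k)_{k≥1} be the unique sequence of analytic coefficient vector fields of the formal interpolation (i.e. such that for every m the time-one map of G_m = Σ_{k=1}^m μ^k g_k agrees with f_μ up to O(μ^{m+1}) at every point). Then for every k there exists a function h_k : B × ℝ^d → ℝ, 1-periodic in each component of q, such that g_k = (−∂_q h_k, ∂_p h_k). -/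

import Mathlib

/-- Real phase space `ℝ^d × ℝ^d` with the sup norm. -/
abbrev RPhase (d : ℕ) := (Fin d → ℝ) × (Fin d → ℝ)

/-- `g` is the sequence of coefficient vector fields of the formal interpolation of the
family `f_μ` on `V`: for every `m` and `x ∈ V`, the time-one map of
`G_m = Σ_{k=1}^m μ^k g_k` differs from `f_μ(x)` by `O(μ^{m+1})` as `μ → 0`. -/
def FormalInterpolation (d : ℕ) (V : Set (RPhase d))
    (f : ℝ → RPhase d → RPhase d) (g : ℕ → RPhase d → RPhase d) : Prop :=
  ∀ m : ℕ, ∀ x ∈ V, ∃ C > (0 : ℝ), ∃ μ' > (0 : ℝ), ∀ μ : ℝ, |μ| ≤ μ' →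
    ∃ γ : ℝ → RPhase d, γ 0 = x ∧
      (∀ t ∈ Set.Icc (0 : ℝ) 1, γ t ∈ V ∧
        HasDerivAt γ (∑ k ∈ Finset.Icc 1 m, μ ^ k • g k (γ t)) t) ∧
      ‖f μ x - γ 1‖ ≤ C * |μ| ^ (m + 1)

/-- The loop action `A(γ) = ∫₀¹ p(t)·q'(t) dt` of a curve `γ = (p,q)` in phase space. -/
noncomputable def loopAction (d : ℕ) (γ : ℝ → RPhase d) : ℝ :=
  ∫ t in (0 : ℝ)..1, ∑ i, (γ t).1 i * deriv (fun u => (γ u).2 i) t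

section Helpers
open Set Filter Topology Asymptotics
open scoped ContDiff


section PartOne

variable {X Y : Type*} [NormedAddCommGroup X] [NormedSpace ℝ X]
  [NormedAddCommGroup Y] [NormedSpace ℝ Y]

/-- asymptotic expansion to order `m` along a filter -/
def HasExp {α Y : Type*} [NormedAddCommGroup Y] [NormedSpace ℝ Y]
    (l : Filter α) (μ : α → ℝ) (m : ℕ) (u : α → Y) (a : ℕ → α → Y) : Prop :=
  (fun z => u z - ∑ j ∈ Finset.range m, μ z ^ j • a j z) =O[l] (fun z => μ z ^ m)

lemma HasExp.mul {α : Type*} {l : Filter α} {μ : α → ℝ} (hμ : μ =O[l] (fun _ => (1 : ℝ))) {m : ℕ}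
    {u v : α → ℝ} {a b : ℕ → α → ℝ} (hu : HasExp l μ m u a) (hv : HasExp l μ m v b)
    (ha : ∀ j, a j =O[l] (fun _ => (1 : ℝ))) (hb : ∀ j, b j =O[l] (fun _ => (1 : ℝ))) :
    HasExp l μ m (fun z => u z * v z)
      (fun j z => ∑ p ∈ Finset.HasAntidiagonal.antidiagonal j, a p.1 z * b p.2 z) := by
  unfold HasExp at *
  have hpow : ∀ n : ℕ, (fun z => μ z ^ n) =O[l] (fun _ => (1 : ℝ)) := by
    intro n
    simpa using hμ.pow n
  have hsum : ∀ c : ℕ → α → ℝ, (∀ j, c j =O[l] (fun _ => (1 : ℝ))) →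
      (fun z => ∑ j ∈ Finset.range m, μ z ^ j • c j z) =O[l] (fun _ => (1 : ℝ)) := by
    intro c hc
    refine IsBigO.fun_sum fun j _ => ?_
    simpa using (hpow j).mul (hc j)
  have hv1 : v =O[l] (fun _ => (1 : ℝ)) := by
    have := (hv.trans (hpow m)).add (hsum b hb)
    simpa using this
  have h1 := hu.mul hv1
  have h2 := (hsum a ha).mul hv
  have h3 : (fun z => ∑ p ∈ (Finset.range m ×ˢ Finset.range m).filter (fun p => ¬ p.1 + p.2 < m),
      μ z ^ (p.1 + p.2) * (a p.1 z * b p.2 z)) =O[l] (fun z => μ z ^ m) := by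
    refine IsBigO.fun_sum fun p hp => ?_
    have hp' : m ≤ p.1 + p.2 := by simpa using (Finset.mem_filter.1 hp).2
    obtain ⟨k, hk⟩ := Nat.exists_eq_add_of_le hp'
    have := (isBigO_refl (fun z => μ z ^ m) l).mul ((hpow k).mul ((ha p.1).mul (hb p.2)))
    simpa [hk, pow_add, mul_assoc] using this
  have key : ∀ z, u z * v z - ∑ j ∈ Finset.range m, μ z ^ j •
        ∑ p ∈ Finset.HasAntidiagonal.antidiagonal j, a p.1 z * b p.2 z
      = (u z - ∑ j ∈ Finset.range m, μ z ^ j • a j z) * v z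
        + (∑ j ∈ Finset.range m, μ z ^ j • a j z) * (v z - ∑ j ∈ Finset.range m, μ z ^ j • b j z)
        + ∑ p ∈ (Finset.range m ×ˢ Finset.range m).filter (fun p => ¬ p.1 + p.2 < m),
            μ z ^ (p.1 + p.2) * (a p.1 z * b p.2 z) := by
    intro z
    have e1 : (∑ j ∈ Finset.range m, μ z ^ j • a j z) * (∑ j ∈ Finset.range m, μ z ^ j • b j z)
        = ∑ p ∈ (Finset.range m ×ˢ Finset.range m), μ z ^ (p.1 + p.2) * (a p.1 z * b p.2 z) := by
      rw [Finset.sum_mul_sum, ← Finset.sum_product']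
      refine Finset.sum_congr rfl fun p _ => ?_
      simp only [smul_eq_mul, pow_add]; ring
    have e2 : ∑ j ∈ Finset.range m, μ z ^ j • ∑ p ∈ Finset.HasAntidiagonal.antidiagonal j, a p.1 z * b p.2 z
        = ∑ p ∈ (Finset.range m ×ˢ Finset.range m).filter (fun p => p.1 + p.2 < m),
            μ z ^ (p.1 + p.2) * (a p.1 z * b p.2 z) := by
      rw [← Finset.sum_fiberwise_of_maps_to (g := fun p : ℕ × ℕ => p.1 + p.2) (t := Finset.range m)
        (by intro p hp; simpa using (Finset.mem_filter.1 hp).2)]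
      refine Finset.sum_congr rfl fun j hj => ?_
      rw [smul_eq_mul, Finset.mul_sum]
      have hj' := Finset.mem_range.1 hj
      refine Finset.sum_congr ?_ ?_
      · ext p
        simp only [Finset.HasAntidiagonal.mem_antidiagonal, Finset.mem_filter, Finset.mem_product, Finset.mem_range]
        omega
      · intro p hp
        have : p.1 + p.2 = j := by simpa using (Finset.mem_filter.1 hp).2
        rw [this]
    have e3 := Finset.sum_filter_add_sum_filter_not (Finset.range m ×ˢ Finset.range m)
      (fun p : ℕ × ℕ => p.1 + p.2 < m) (fun p => μ z ^ (p.1 + p.2) * (a p.1 z * b p.2 z))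
    rw [e2]
    linear_combination e1 - e3
  simp only [key]
  refine IsBigO.add (IsBigO.add ?_ ?_) h3
  · simpa using h1
  · simpa using h2

lemma exp_unique {Y : Type*} [NormedAddCommGroup Y] [NormedSpace ℝ Y] (m : ℕ) (c : ℕ → Y)
    (h : (fun μ : ℝ => ∑ j ∈ Finset.range m, μ ^ j • c j) =O[𝓝[>] 0] (fun μ => μ ^ m)) :
    ∀ j < m, c j = 0 := by
  induction m generalizing c with
  | zero => intro j hj; omega
  | succ m ih =>
    have hid : Tendsto (fun μ : ℝ => μ) (𝓝[>] 0) (𝓝 0) := tendsto_nhdsWithin_of_tendsto_nhds tendsto_id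
    have h0 : c 0 = 0 := by
      have t1 : Tendsto (fun μ : ℝ => ∑ j ∈ Finset.range (m+1), μ ^ j • c j) (𝓝[>] 0) (𝓝 0) := by
        refine h.trans_tendsto ?_
        simpa using hid.pow (m+1)
      have t2 : Tendsto (fun μ : ℝ => ∑ j ∈ Finset.range (m+1), μ ^ j • c j) (𝓝[>] 0) (𝓝 (c 0)) := by
        have hc : Continuous (fun μ : ℝ => ∑ j ∈ Finset.range (m+1), μ ^ j • c j) := by fun_prop
        have := tendsto_nhdsWithin_of_tendsto_nhds (s := Ioi 0) (hc.tendsto 0)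
        simpa [Finset.sum_range_succ'] using this
      exact tendsto_nhds_unique t2 t1
    have h' := ih (fun j => c (j+1)) (by
      have e : ∀ μ : ℝ, ∑ j ∈ Finset.range (m+1), μ ^ j • c j
          = μ • ∑ j ∈ Finset.range m, μ ^ j • c (j+1) := by
        intro μ
        rw [Finset.sum_range_succ', h0, Finset.smul_sum]
        simp [pow_succ', mul_smul]
      simp only [e] at h
      obtain ⟨C, hC⟩ := h.bound
      refine IsBigO.of_bound C ?_
      filter_upwards [hC, self_mem_nhdsWithin] with μ h1 h2
      have h2' : (0:ℝ) < ‖μ‖ := by simpa using ne_of_gt (show (0:ℝ) < μ from h2)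
      rw [norm_smul, pow_succ', norm_mul] at h1
      refine le_of_mul_le_mul_left ?_ h2'
      linarith)
    intro j hj
    cases j with
    | zero => exact h0
    | succ j => exact h' j (by omega)

/-- directional derivative -/
noncomputable def dirD {X Y : Type*} [NormedAddCommGroup X] [NormedSpace ℝ X]
    [NormedAddCommGroup Y] [NormedSpace ℝ Y] (v : X) (H : X → Y) : X → Y :=
  fun z => fderiv ℝ H z v

lemma dirD_smooth {U : Set X} (hU : IsOpen U) {H : X → Y} (hH : ContDiffOn ℝ ∞ H U) (v : X) :
    ContDiffOn ℝ ∞ (dirD v H) U :=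
  (hH.fderiv_of_isOpen hU (by simp)).clm_apply contDiffOn_const

lemma dirD_iter_smooth {U : Set X} (hU : IsOpen U) {H : X → Y} (hH : ContDiffOn ℝ ∞ H U) (v : X)
    (j : ℕ) : ContDiffOn ℝ ∞ ((dirD v)^[j] H) U := by
  induction j with
  | zero => exact hH
  | succ j ih => rw [Function.iterate_succ_apply']; exact dirD_smooth hU ih v

lemma symm_snd {U : Set X} (hU : IsOpen U) {H : X → Y} (hH : ContDiffOn ℝ ∞ H U)
    {x : X} (hx : x ∈ U) (v w : X) :
    fderiv ℝ (fderiv ℝ H) x v w = fderiv ℝ (fderiv ℝ H) x w v :=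
  ((hH.contDiffAt (hU.mem_nhds hx)).isSymmSndFDerivAt (by rw [minSmoothness_of_isRCLikeNormedField]; exact WithTop.coe_le_coe.2 (le_top : (2:ℕ∞) ≤ ⊤))) v w

lemma diffAt_of {U : Set X} (hU : IsOpen U) {H : X → Y} (hH : ContDiffOn ℝ ∞ H U)
    {x : X} (hx : x ∈ U) : DifferentiableAt ℝ H x :=
  (hH.contDiffAt (hU.mem_nhds hx)).differentiableAt (by simp)

lemma dirD_comm {U : Set X} (hU : IsOpen U) {H : X → Y} (hH : ContDiffOn ℝ ∞ H U)
    {x : X} (hx : x ∈ U) (v w : X) : dirD v (dirD w H) x = dirD w (dirD v H) x := by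
  have hd := diffAt_of hU (hH.fderiv_of_isOpen (m := ∞) hU (by simp)) hx
  have : ∀ v w : X, dirD v (dirD w H) x = fderiv ℝ (fderiv ℝ H) x v w := by
    intro v w
    unfold dirD
    rw [fderiv_clm_apply hd (by fun_prop)]
    simp
  rw [this, this, symm_snd hU hH hx]

lemma dirD_congr {U : Set X} (hU : IsOpen U) {H H' : X → Y} (h : EqOn H H' U)
    (v : X) : EqOn (dirD v H) (dirD v H') U := by
  intro x hx
  unfold dirD
  rw [Filter.EventuallyEq.fderiv_eq (h.eventuallyEq_of_mem (hU.mem_nhds hx))]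

lemma dirD_iter_congr {U : Set X} (hU : IsOpen U) {H H' : X → Y} (h : EqOn H H' U)
    (v : X) (j : ℕ) : EqOn ((dirD v)^[j] H) ((dirD v)^[j] H') U := by
  induction j with
  | zero => exact h
  | succ j ih => rw [Function.iterate_succ_apply', Function.iterate_succ_apply']; exact dirD_congr hU ih v

lemma dirD_iter_comm {U : Set X} (hU : IsOpen U) {H : X → Y} (hH : ContDiffOn ℝ ∞ H U)
    (v w : X) (j : ℕ) : EqOn ((dirD v)^[j] (dirD w H)) (dirD w ((dirD v)^[j] H)) U := by
  induction j with
  | zero => exact fun _ _ => rfl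
  | succ j ih =>
    rw [Function.iterate_succ_apply', Function.iterate_succ_apply']
    refine (dirD_congr hU ih v).trans ?_
    intro x hx
    exact dirD_comm hU (dirD_iter_smooth hU hH v j) hx v w

/-- Taylor expansion in the last variable, uniform on compact sets -/
lemma taylor_unif {V K : Set X} (hV : IsOpen V) (hK : IsCompact K) (hKV : K ⊆ V)
    {δ : ℝ} (m : ℕ) : ∀ {H : X × ℝ → Y},
    ContDiffOn ℝ ∞ H (V ×ˢ Metric.ball (0:ℝ) δ) → ∀ ε < δ,
    ∃ C : ℝ, ∀ x ∈ K, ∀ μ ∈ Icc (0:ℝ) ε,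
    ‖H (x, μ) - ∑ j ∈ Finset.range m, μ ^ j • ((Nat.factorial j : ℝ)⁻¹ •
      (dirD ((0:X),(1:ℝ)))^[j] H (x, 0))‖ ≤ C * μ ^ m := by
  have hU : IsOpen (V ×ˢ Metric.ball (0:ℝ) δ) := hV.prod Metric.isOpen_ball
  induction m with
  | zero =>
    intro H hH ε hε
    have hc : IsCompact (K ×ˢ Icc (0:ℝ) ε) := hK.prod isCompact_Icc
    have hsub : K ×ˢ Icc (0:ℝ) ε ⊆ V ×ˢ Metric.ball (0:ℝ) δ := by
      refine Set.prod_mono hKV fun μ hμ => ?_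
      simp only [Metric.mem_ball, dist_zero_right, Real.norm_eq_abs, abs_of_nonneg hμ.1]
      linarith [hμ.2]
    obtain ⟨C, hC⟩ := hc.exists_bound_of_continuousOn (hH.continuousOn.mono hsub)
    exact ⟨C, fun x hx μ hμ => by simpa using hC (x, μ) ⟨hx, hμ⟩⟩
  | succ m ih =>
    intro H hH ε hε
    obtain ⟨C, hC⟩ := ih (dirD_smooth hU hH ((0:X),(1:ℝ))) ε hε
    refine ⟨|C|, fun x hx μ hμ => ?_⟩
    let c : ℕ → Y := fun j => (dirD ((0:X),(1:ℝ)))^[j] H (x, 0)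
    let R : ℝ → Y := fun ν => H (x, ν) - ∑ j ∈ Finset.range (m+1), ν ^ j • ((Nat.factorial j : ℝ)⁻¹ • c j)
    have hR0 : R 0 = 0 := by
      simp [R, c, Finset.sum_range_succ']
    have hder : ∀ ν ∈ Icc (0:ℝ) μ, HasDerivWithinAt R (dirD ((0:X),(1:ℝ)) H (x, ν) -
        ∑ j ∈ Finset.range m, ν ^ j • ((Nat.factorial j : ℝ)⁻¹ • c (j+1))) (Icc 0 μ) ν := by
      intro ν hν
      refine HasDerivAt.hasDerivWithinAt ?_
      refine HasDerivAt.sub ?_ ?_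
      · have hmem : (x, ν) ∈ V ×ˢ Metric.ball (0:ℝ) δ := by
          refine ⟨hKV hx, ?_⟩
          simp only [Metric.mem_ball, dist_zero_right, Real.norm_eq_abs, abs_of_nonneg hν.1]
          linarith [hν.2, hμ.2]
        have h1 := (diffAt_of hU hH hmem).hasFDerivAt
        exact h1.comp_hasDerivAt (f := fun ν : ℝ => (x, ν)) ν ((hasDerivAt_const ν x).prodMk (hasDerivAt_id ν))
      · have h2 : HasDerivAt (fun ν : ℝ => ∑ j ∈ Finset.range (m+1), ν ^ j • ((Nat.factorial j : ℝ)⁻¹ • c j))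
            (∑ j ∈ Finset.range (m+1), ((j:ℝ) * ν ^ (j-1)) • ((Nat.factorial j : ℝ)⁻¹ • c j)) ν := by
          refine HasDerivAt.fun_sum fun j _ => ?_
          exact (hasDerivAt_pow j ν).smul_const _
        convert h2 using 1
        rw [Finset.sum_range_succ']
        simp only [Nat.cast_zero, zero_mul, zero_smul, add_zero]
        refine Finset.sum_congr rfl fun j _ => ?_
        rw [smul_smul, smul_smul]
        congr 1
        rw [Nat.factorial_succ, Nat.add_sub_cancel]
        have : (Nat.factorial j : ℝ) ≠ 0 := by positivity
        push_cast
        field_simp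
    have hb : ∀ ν ∈ Ico (0:ℝ) μ, ‖dirD ((0:X),(1:ℝ)) H (x, ν) -
        ∑ j ∈ Finset.range m, ν ^ j • ((Nat.factorial j : ℝ)⁻¹ • c (j+1))‖ ≤ |C| * μ ^ m := by
      intro ν hν
      refine (hC x hx ν ⟨hν.1, hν.2.le.trans hμ.2⟩).trans ?_
      have : ν ^ m ≤ μ ^ m := pow_le_pow_left₀ hν.1 hν.2.le m
      have h0 : 0 ≤ ν ^ m := pow_nonneg hν.1 m
      calc C * ν ^ m ≤ |C| * ν ^ m := by gcongr; exact le_abs_self C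
        _ ≤ _ := by gcongr
    have hfin := norm_image_sub_le_of_norm_deriv_le_segment' hder hb μ ⟨hμ.1, le_rfl⟩
    rw [hR0, sub_zero, sub_zero] at hfin
    rw [pow_succ, ← mul_assoc]
    exact hfin

end PartOne

section PartTwo

lemma sum_split {M : Type*} [AddCommMonoid M] (m : ℕ) (c : ℕ × ℕ → M) :
    ∑ p ∈ Finset.range m ×ˢ Finset.range m, c p =
      ∑ j ∈ Finset.range m, ∑ p ∈ Finset.HasAntidiagonal.antidiagonal j, c p
      + ∑ p ∈ (Finset.range m ×ˢ Finset.range m).filter (fun p => ¬ p.1 + p.2 < m), c p := by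
  rw [← Finset.sum_filter_add_sum_filter_not (Finset.range m ×ˢ Finset.range m)
      (fun p : ℕ × ℕ => p.1 + p.2 < m) c]
  congr 1
  rw [← Finset.sum_fiberwise_of_maps_to (g := fun p : ℕ × ℕ => p.1 + p.2) (t := Finset.range m)
    (by intro p hp; simpa using (Finset.mem_filter.1 hp).2)]
  refine Finset.sum_congr rfl fun j hj => ?_
  have hj' := Finset.mem_range.1 hj
  refine Finset.sum_congr ?_ fun _ _ => rfl
  ext p
  simp only [Finset.HasAntidiagonal.mem_antidiagonal, Finset.mem_filter, Finset.mem_product,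
    Finset.mem_range]
  omega

variable {X : Type*} [NormedAddCommGroup X] [NormedSpace ℝ X]

/-- coefficients of the formal flow -/
noncomputable def fl {X : Type*} [NormedAddCommGroup X] [NormedSpace ℝ X] (g : ℕ → X → X) :
    ℕ → ℕ → X → X
  | 0, j => if j = 0 then id else 0
  | n + 1, j => fun x => ((n : ℝ) + 1)⁻¹ •
      ∑ p ∈ Finset.HasAntidiagonal.antidiagonal j, fderiv ℝ (fl g n p.2) x (g p.1 x)

lemma fl_rec (g : ℕ → X → X) (n j : ℕ) (x : X) : ((n : ℝ) + 1) • fl g (n+1) j x =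
    ∑ p ∈ Finset.HasAntidiagonal.antidiagonal j, fderiv ℝ (fl g n p.2) x (g p.1 x) := by
  rw [fl, smul_smul, mul_inv_cancel₀ (by positivity), one_smul]

lemma fl_smooth {V : Set X} (hV : IsOpen V) {g : ℕ → X → X} (hg : ∀ k, ContDiffOn ℝ ∞ (g k) V)
    (n j : ℕ) : ContDiffOn ℝ ∞ (fl g n j) V := by
  induction n generalizing j with
  | zero =>
    rw [fl]; split_ifs
    · exact contDiffOn_id
    · exact contDiffOn_const
  | succ n ih =>
    rw [fl]
    refine ContDiffOn.const_smul _ (ContDiffOn.sum fun p _ => ?_)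
    exact ((ih p.2).fderiv_of_isOpen hV (by simp)).clm_apply (hg p.1)

lemma fl_zero {g : ℕ → X → X} (hg0 : g 0 = 0) (n j : ℕ) (h : j < n) : fl g n j = 0 := by
  induction n generalizing j with
  | zero => omega
  | succ n ih =>
    rw [fl]
    funext x
    rw [Finset.sum_eq_zero, smul_zero]; rfl
    intro p hp
    have hp' := Finset.HasAntidiagonal.mem_antidiagonal.1 hp
    rcases Nat.eq_zero_or_pos p.1 with h0 | h0
    · rw [h0, hg0]; simp
    · rw [ih p.2 (by omega)]; simp

lemma fl_one {g : ℕ → X → X} (j : ℕ) : fl g 1 j = g j := by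
  funext x
  rw [fl]
  beta_reduce
  rw [Finset.sum_eq_single (j, 0)]
  · simp [fl]
  · intro p hp hne
    have hp' := Finset.HasAntidiagonal.mem_antidiagonal.1 hp
    have : p.2 ≠ 0 := by
      intro h0; apply hne; ext <;> simp <;> omega
    simp [fl, this]
  · intro h; exact absurd (Finset.HasAntidiagonal.mem_antidiagonal.2 (by simp)) h

lemma traj_est [ProperSpace X] {V : Set X} (hV : IsOpen V) {g : ℕ → X → X}
    (hg : ∀ k, ContDiffOn ℝ ∞ (g k) V) (hg0 : g 0 = 0) {x0 : X} (hx0 : x0 ∈ V) (m : ℕ) (hm : 0 < m) :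
    ∃ C : ℝ, ∃ δ > (0:ℝ), ∀ μ ∈ Ioo (0:ℝ) δ, ∀ γ : ℝ → X, γ 0 = x0 →
      (∀ t ∈ Icc (0:ℝ) 1, HasDerivAt γ (∑ k ∈ Finset.range m, μ ^ k • g k (γ t)) t) →
      ‖γ 1 - ∑ j ∈ Finset.range m, μ ^ j • ∑ n ∈ Finset.range (m+1), fl g n j x0‖ ≤ C * μ ^ m := by
  obtain ⟨r, hr, hrV⟩ := Metric.nhds_basis_closedBall.mem_iff.1 (hV.mem_nhds hx0)
  have hK : IsCompact (Metric.closedBall x0 r) := isCompact_closedBall x0 r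
  have hMk : ∀ k, ∃ M, ∀ y ∈ Metric.closedBall x0 r, ‖g k y‖ ≤ M := fun k =>
    hK.exists_bound_of_continuousOn ((hg k).continuousOn.mono hrV)
  choose M hM using hMk
  have hNk : ∀ (n : ℕ) (p : ℕ × ℕ), ∃ N, ∀ y ∈ Metric.closedBall x0 r,
      ‖fderiv ℝ (fl g n p.2) y (g p.1 y)‖ ≤ N := fun n p =>
    hK.exists_bound_of_continuousOn (((((fl_smooth hV hg n p.2).fderiv_of_isOpen (m := ∞) hV
      (by simp)).clm_apply (hg p.1)).continuousOn).mono hrV)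
  choose N hN using hNk
  let S : ℝ := ∑ k ∈ Finset.range m, |M k|
  have hS : 0 ≤ S := Finset.sum_nonneg fun _ _ => abs_nonneg _
  let bad := (Finset.range m ×ˢ Finset.range m).filter (fun p : ℕ × ℕ => ¬ p.1 + p.2 < m)
  refine ⟨∑ p ∈ bad, ∑ n ∈ Finset.range m, |N n p|, min 1 (r / 2 / (S + 1)),
    by positivity, ?_⟩
  intro μ hμ γ hγ0 hγ
  have hμ0 := hμ.1
  have hμ1 : μ < 1 := hμ.2.trans_le (min_le_left _ _)
  have hμ2 : μ * (S + 1) < r / 2 := by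
    have := hμ.2.trans_le (min_le_right _ _)
    rwa [lt_div_iff₀ (by positivity)] at this
  -- confinement
  have hGb : ∀ y ∈ Metric.closedBall x0 r, ‖∑ k ∈ Finset.range m, μ ^ k • g k y‖ < r / 2 := by
    intro y hy
    refine lt_of_le_of_lt ?_ hμ2
    calc ‖∑ k ∈ Finset.range m, μ ^ k • g k y‖ ≤ ∑ k ∈ Finset.range m, μ * |M k| := by
          refine norm_sum_le_of_le _ fun k _ => ?_
          rcases Nat.eq_zero_or_pos k with rfl | hk
          · rw [hg0]; simp; positivity
          · rw [norm_smul, norm_pow, Real.norm_eq_abs, abs_of_pos hμ0]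
            have h1 : μ ^ k ≤ μ := pow_le_of_le_one hμ0.le hμ1.le (by omega)
            have h2 : ‖g k y‖ ≤ |M k| := (hM k y hy).trans (le_abs_self _)
            gcongr
      _ = μ * S := by rw [← Finset.mul_sum]
      _ ≤ μ * (S + 1) := by gcongr; linarith
  have hconf : ∀ t ∈ Icc (0:ℝ) 1, γ t ∈ Metric.closedBall x0 r := by
    have := image_norm_le_of_norm_deriv_right_lt_deriv_boundary (f := fun t => γ t - x0)
      (f' := fun t => ∑ k ∈ Finset.range m, μ ^ k • g k (γ t)) (a := 0) (b := 1)
      (B := fun t => r / 2 * (1 + t)) (B' := fun _ => r / 2)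
      (fun t ht => ((hγ t ht).sub_const x0).continuousAt.continuousWithinAt)
      (fun t ht => ((hγ t ⟨ht.1, ht.2.le⟩).sub_const x0).hasDerivWithinAt)
      (by simp [hγ0]; positivity)
      (fun t => by simpa using ((hasDerivAt_id t).const_add 1).const_mul (r/2))
      (fun t ht he => hGb _ (by
        rw [mem_closedBall_iff_norm, he]; nlinarith [ht.1, ht.2]))
    intro t ht
    rw [mem_closedBall_iff_norm]
    refine (this ht).trans ?_
    nlinarith [ht.1, ht.2]
  let ψ : ℝ → X := fun t => ∑ j ∈ Finset.range m, μ ^ j • ∑ n ∈ Finset.range (m+1),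
    (1 - t) ^ n • fl g n j (γ t)
  have hψ0 : ψ 0 = ∑ j ∈ Finset.range m, μ ^ j • ∑ n ∈ Finset.range (m+1), fl g n j x0 := by
    simp [ψ, hγ0]
  have hψ1 : m ≠ 0 → ψ 1 = γ 1 := by
    intro hm
    obtain ⟨m', rfl⟩ := Nat.exists_eq_succ_of_ne_zero hm
    simp only [ψ, sub_self]
    rw [Finset.sum_range_succ', Finset.sum_eq_zero]
    · rw [Finset.sum_range_succ']; simp [fl]
    · intro j _
      rw [Finset.sum_range_succ']; simp [fl]
  let D : ℕ → ℕ → ℝ → X := fun n j t => fderiv ℝ (fl g n j) (γ t) (∑ k ∈ Finset.range m, μ ^ k • g k (γ t))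
  have hder : ∀ t ∈ Icc (0:ℝ) 1, HasDerivWithinAt ψ
      (∑ p ∈ bad, μ ^ (p.1 + p.2) • ∑ n ∈ Finset.range m,
        (1 - t) ^ n • fderiv ℝ (fl g n p.2) (γ t) (g p.1 (γ t))) (Icc 0 1) t := by
    intro t ht
    refine HasDerivAt.hasDerivWithinAt ?_
    have h1 : HasDerivAt ψ (∑ j ∈ Finset.range m, μ ^ j • ∑ n ∈ Finset.range (m+1),
        ((1 - t) ^ n • D n j t + ((n:ℝ) * (1 - t) ^ (n-1) * (-1)) • fl g n j (γ t))) t := by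
      refine HasDerivAt.fun_sum fun j _ => HasDerivAt.const_smul _ (HasDerivAt.fun_sum fun n _ => ?_)
      refine HasDerivAt.smul ?_ ?_
      · exact (((hasDerivAt_id t).const_sub 1).pow n)
      · exact (diffAt_of hV (fl_smooth hV hg n j) (hrV (hconf t ht))).hasFDerivAt.comp_hasDerivAt t (hγ t ht)
    convert h1 using 1
    set s := 1 - t
    set y := γ t
    let c : ℕ × ℕ → X := fun p => μ ^ (p.1 + p.2) • ∑ n ∈ Finset.range m,
        s ^ n • fderiv ℝ (fl g n p.2) y (g p.1 y)
    have hsp := sum_split m c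
    have e1 : ∑ j ∈ Finset.range m, μ ^ j • ∑ n ∈ Finset.range (m+1), s ^ n • D n j t
        = ∑ p ∈ Finset.range m ×ˢ Finset.range m, c p := by
      rw [Finset.sum_product_right]
      refine Finset.sum_congr rfl fun j hj => ?_
      rw [Finset.sum_range_succ]
      have : D m j t = 0 := by
        simp only [D]; rw [fl_zero hg0 m j (Finset.mem_range.1 hj)]; simp
      rw [this, smul_zero, add_zero]
      simp only [D, c, map_sum, map_smul, Finset.smul_sum]
      rw [Finset.sum_comm]
      refine Finset.sum_congr rfl fun k _ => Finset.sum_congr rfl fun n _ => ?_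
      simp only [smul_smul]
      congr 1
      ring
    have e2 : ∑ j ∈ Finset.range m, μ ^ j • ∑ n ∈ Finset.range (m+1),
        ((n:ℝ) * s ^ (n-1) * (-1)) • fl g n j y
        = - ∑ j ∈ Finset.range m, ∑ p ∈ Finset.HasAntidiagonal.antidiagonal j, c p := by
      rw [← Finset.sum_neg_distrib]
      refine Finset.sum_congr rfl fun j hj => ?_
      rw [Finset.sum_range_succ']
      simp only [Nat.cast_zero, zero_mul, zero_smul, add_zero, Nat.add_sub_cancel, Nat.cast_add,
        Nat.cast_one]
      have : ∀ n : ℕ, (((n:ℝ) + 1) * s ^ n * -1) • fl g (n+1) j y =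
          - (s ^ n • ∑ p ∈ Finset.HasAntidiagonal.antidiagonal j, fderiv ℝ (fl g n p.2) y (g p.1 y)) := by
        intro n
        rw [← fl_rec, smul_smul, ← neg_smul]
        congr 1; ring
      simp only [this, Finset.sum_neg_distrib, smul_neg, c]
      congr 1
      simp only [Finset.smul_sum]
      rw [Finset.sum_comm]
      refine Finset.sum_congr rfl fun p hp => Finset.sum_congr rfl fun n _ => ?_
      rw [Finset.HasAntidiagonal.mem_antidiagonal.1 hp]
    simp only [Finset.sum_add_distrib, smul_add]
    rw [e1, e2, hsp]
    simp only [c, bad]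
    abel
  have hfin := norm_image_sub_le_of_norm_deriv_le_segment_01' hder
    (C := (∑ p ∈ bad, ∑ n ∈ Finset.range m, |N n p|) * μ ^ m) (by
      intro t ht
      rw [Finset.sum_mul]
      refine norm_sum_le_of_le _ fun p hp => ?_
      have hp' : m ≤ p.1 + p.2 := by simpa using (Finset.mem_filter.1 hp).2
      rw [norm_smul, norm_pow, Real.norm_eq_abs, abs_of_pos hμ0, mul_comm]
      have h1 : μ ^ (p.1 + p.2) ≤ μ ^ m := pow_le_pow_of_le_one hμ0.le hμ1.le hp'
      have h2 : ‖∑ n ∈ Finset.range m, (1 - t) ^ n • fderiv ℝ (fl g n p.2) (γ t) (g p.1 (γ t))‖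
          ≤ ∑ n ∈ Finset.range m, |N n p| := by
        refine norm_sum_le_of_le _ fun n _ => ?_
        rw [norm_smul, norm_pow, Real.norm_eq_abs, abs_of_nonneg (by linarith [ht.2])]
        have h3 : (1 - t) ^ n ≤ 1 := pow_le_one₀ (by linarith [ht.2]) (by linarith [ht.1])
        have h4 := (hN n p (γ t) (hconf t ⟨ht.1, ht.2.le⟩)).trans (le_abs_self _)
        calc _ ≤ 1 * |N n p| := by gcongr
          _ = _ := one_mul _
      gcongr)
  rw [hψ1 hm.ne', hψ0] at hfin
  exact hfin

end PartTwo

section PartThree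

lemma tri_one {Z : Type*} [AddCommMonoid Z] (F : ℕ → ℕ → ℕ → Z) (m : ℕ) :
    ∑ p ∈ Finset.HasAntidiagonal.antidiagonal m, ∑ p' ∈ Finset.HasAntidiagonal.antidiagonal p.1,
      F p'.1 p'.2 p.2
    = ∑ p ∈ Finset.HasAntidiagonal.antidiagonal m, ∑ p' ∈ Finset.HasAntidiagonal.antidiagonal p.2,
      F p.1 p'.1 p'.2 := by
  simp only [Finset.sum_sigma']
  refine Finset.sum_nbij' (fun q => ⟨(q.2.1, q.2.2 + q.1.2), (q.2.2, q.1.2)⟩)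
    (fun q => ⟨(q.1.1 + q.2.1, q.2.2), (q.1.1, q.2.1)⟩) ?_ ?_ ?_ ?_ ?_ <;>
  · rintro ⟨⟨a, b⟩, ⟨c, e⟩⟩ h
    simp only [Finset.mem_sigma, Finset.HasAntidiagonal.mem_antidiagonal] at h
    obtain ⟨h1, h2⟩ := h
    subst h1
    subst h2
    simp [add_assoc]

lemma tri_two {Z : Type*} [AddCommMonoid Z] (F : ℕ → ℕ → ℕ → Z) (m : ℕ) :
    ∑ p ∈ Finset.HasAntidiagonal.antidiagonal m, ∑ p' ∈ Finset.HasAntidiagonal.antidiagonal p.2,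
      F p'.1 p.1 p'.2
    = ∑ p ∈ Finset.HasAntidiagonal.antidiagonal m, ∑ p' ∈ Finset.HasAntidiagonal.antidiagonal p.2,
      F p.1 p'.1 p'.2 := by
  simp only [Finset.sum_sigma']
  refine Finset.sum_nbij' (fun q => ⟨(q.2.1, q.1.1 + q.2.2), (q.1.1, q.2.2)⟩)
    (fun q => ⟨(q.2.1, q.1.1 + q.2.2), (q.1.1, q.2.2)⟩) ?_ ?_ ?_ ?_ ?_ <;>
  · rintro ⟨⟨a, b⟩, ⟨c, e⟩⟩ h
    simp only [Finset.mem_sigma, Finset.HasAntidiagonal.mem_antidiagonal] at h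
    obtain ⟨h1, h2⟩ := h
    subst h1
    subst h2
    simp [add_left_comm]

lemma conv_rec {A M Z : Type*} [AddCommGroup A] [Module ℝ A] [AddCommGroup M] [Module ℝ M]
    [AddCommGroup Z] [Module ℝ Z] (β : A →ₗ[ℝ] M →ₗ[ℝ] Z) (U : ℕ → ℕ → A) (S : ℕ → ℕ → M)
    (P : ℕ → ℕ → ℕ → A) (Q : ℕ → ℕ → ℕ → M)
    (hP : ∀ n j : ℕ, ((n:ℝ)+1) • U (n+1) j = ∑ p ∈ Finset.HasAntidiagonal.antidiagonal j, P p.1 n p.2)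
    (hQ : ∀ n j : ℕ, ((n:ℝ)+1) • S (n+1) j = ∑ p ∈ Finset.HasAntidiagonal.antidiagonal j, Q p.1 n p.2)
    (n m : ℕ) :
    ((n:ℝ)+1) • ∑ q ∈ Finset.HasAntidiagonal.antidiagonal (n+1),
        ∑ p ∈ Finset.HasAntidiagonal.antidiagonal m, β (U q.1 p.1) (S q.2 p.2)
    = ∑ p ∈ Finset.HasAntidiagonal.antidiagonal m, ∑ q ∈ Finset.HasAntidiagonal.antidiagonal n,
        ∑ p' ∈ Finset.HasAntidiagonal.antidiagonal p.2,
          (β (P p.1 q.1 p'.1) (S q.2 p'.2) + β (U q.1 p'.1) (Q p.1 q.2 p'.2)) := by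
  let c : ℕ × ℕ → Z := fun q => ∑ p ∈ Finset.HasAntidiagonal.antidiagonal m, β (U q.1 p.1) (S q.2 p.2)
  have h1 : ((n:ℝ)+1) • ∑ q ∈ Finset.HasAntidiagonal.antidiagonal (n+1), c q
      = ∑ q ∈ Finset.HasAntidiagonal.antidiagonal (n+1), (q.1 : ℝ) • c q
        + ∑ q ∈ Finset.HasAntidiagonal.antidiagonal (n+1), (q.2 : ℝ) • c q := by
    rw [Finset.smul_sum, ← Finset.sum_add_distrib]
    refine Finset.sum_congr rfl fun q hq => ?_
    rw [← add_smul]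
    congr 1
    exact_mod_cast (Finset.HasAntidiagonal.mem_antidiagonal.1 hq).symm
  have h2 : ∑ q ∈ Finset.HasAntidiagonal.antidiagonal (n+1), (q.1 : ℝ) • c q
      = ∑ q ∈ Finset.HasAntidiagonal.antidiagonal n, ∑ p ∈ Finset.HasAntidiagonal.antidiagonal m,
        ∑ p' ∈ Finset.HasAntidiagonal.antidiagonal p.2, β (P p.1 q.1 p'.1) (S q.2 p'.2) := by
    rw [Finset.Nat.sum_antidiagonal_succ]
    simp only [Nat.cast_zero, zero_smul, zero_add]
    refine Finset.sum_congr rfl fun q _ => ?_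
    rw [← tri_one (fun k a b => β (P k q.1 a) (S q.2 b))]
    simp only [c, Finset.smul_sum]
    refine Finset.sum_congr rfl fun p _ => ?_
    rw [Nat.cast_add, Nat.cast_one, ← LinearMap.smul_apply, ← map_smul, hP]
    simp
  have h3 : ∑ q ∈ Finset.HasAntidiagonal.antidiagonal (n+1), (q.2 : ℝ) • c q
      = ∑ q ∈ Finset.HasAntidiagonal.antidiagonal n, ∑ p ∈ Finset.HasAntidiagonal.antidiagonal m,
        ∑ p' ∈ Finset.HasAntidiagonal.antidiagonal p.2, β (U q.1 p'.1) (Q p.1 q.2 p'.2) := by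
    rw [Finset.Nat.sum_antidiagonal_succ']
    simp only [Nat.cast_zero, zero_smul, add_zero, zero_add]
    refine Finset.sum_congr rfl fun q _ => ?_
    rw [← tri_two (fun k a b => β (U q.1 a) (Q k q.2 b))]
    simp only [c, Finset.smul_sum]
    refine Finset.sum_congr rfl fun p _ => ?_
    rw [Nat.cast_add, Nat.cast_one, ← map_smul, hQ]
    simp
  change ((n:ℝ)+1) • ∑ q ∈ Finset.HasAntidiagonal.antidiagonal (n+1), c q = _
  rw [h1, h2, h3, Finset.sum_comm, Finset.sum_comm (s := Finset.HasAntidiagonal.antidiagonal n),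
    ← Finset.sum_add_distrib]
  refine Finset.sum_congr rfl fun p _ => ?_
  rw [← Finset.sum_add_distrib]
  refine Finset.sum_congr rfl fun q _ => ?_
  rw [← Finset.sum_add_distrib]

variable {X : Type*} [NormedAddCommGroup X] [NormedSpace ℝ X]

/-- Lie derivative of a one-form -/
noncomputable def lieF {X : Type*} [NormedAddCommGroup X] [NormedSpace ℝ X] (g : X → X)
    (α : X → X →L[ℝ] ℝ) : X → X →L[ℝ] ℝ :=
  fun x => fderiv ℝ α x (g x) + (α x).comp (fderiv ℝ g x)

/-- exact with a smooth primitive invariant under translations by `T` -/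
def ExactP {X : Type*} [NormedAddCommGroup X] [NormedSpace ℝ X] (T V : Set X)
    (α : X → X →L[ℝ] ℝ) : Prop :=
  ∃ w : X → ℝ, ContDiffOn ℝ ∞ w V ∧ (∀ e ∈ T, ∀ x ∈ V, w (x + e) = w x) ∧
    ∀ x ∈ V, fderiv ℝ w x = α x

lemma ExactP.congr {T V : Set X} {α β : X → X →L[ℝ] ℝ} (h : ExactP T V α) (he : ∀ x ∈ V, β x = α x) :
    ExactP T V β := by
  obtain ⟨w, h1, h2, h3⟩ := h
  exact ⟨w, h1, h2, fun x hx => by rw [h3 x hx, he x hx]⟩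

lemma ExactP.smul {T V : Set X} (hV : IsOpen V) {α : X → X →L[ℝ] ℝ} (h : ExactP T V α) (c : ℝ) :
    ExactP T V (fun x => c • α x) := by
  obtain ⟨w, h1, h2, h3⟩ := h
  refine ⟨fun x => c • w x, contDiffOn_const.fun_smul h1, fun e he x hx => by simp only [h2 e he x hx],
    fun x hx => ?_⟩
  rw [fderiv_fun_const_smul (diffAt_of hV h1 hx), h3 x hx]

lemma ExactP.add {T V : Set X} (hV : IsOpen V) {α β : X → X →L[ℝ] ℝ} (h : ExactP T V α)
    (h' : ExactP T V β) : ExactP T V (fun x => α x + β x) := by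
  obtain ⟨w, h1, h2, h3⟩ := h
  obtain ⟨w', h1', h2', h3'⟩ := h'
  refine ⟨fun x => w x + w' x, h1.add h1', fun e he x hx => by simp only [h2 e he x hx, h2' e he x hx],
    fun x hx => ?_⟩
  rw [fderiv_fun_add (diffAt_of hV h1 hx) (diffAt_of hV h1' hx), h3 x hx, h3' x hx]

lemma ExactP.zero {T V : Set X} : ExactP T V (fun _ => (0 : X →L[ℝ] ℝ)) :=
  ⟨fun _ => 0, contDiffOn_const, fun _ _ _ _ => rfl, fun x _ => by simp⟩

lemma ExactP.sum {ι : Type*} {T V : Set X} (hV : IsOpen V) (s : Finset ι) {α : ι → X → X →L[ℝ] ℝ}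
    (h : ∀ i ∈ s, ExactP T V (α i)) : ExactP T V (fun x => ∑ i ∈ s, α i x) := by
  classical
  induction s using Finset.induction_on with
  | empty => simpa using ExactP.zero
  | insert i s hi ih =>
    simp only [Finset.sum_insert hi]
    exact (h i (Finset.mem_insert_self i s)).add hV
      (ih fun j hj => h j (Finset.mem_insert_of_mem hj))

lemma ExactP.lie {T V : Set X} (hV : IsOpen V)
    {g : X → X} (hg : ContDiffOn ℝ ∞ g V) (hgT : ∀ e ∈ T, ∀ x ∈ V, g (x + e) = g x)
    {α : X → X →L[ℝ] ℝ} (h : ExactP T V α) : ExactP T V (lieF g α) := by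
  obtain ⟨w, h1, h2, h3⟩ := h
  have hdw : ContDiffOn ℝ ∞ (fderiv ℝ w) V := h1.fderiv_of_isOpen hV (by simp)
  refine ⟨fun x => fderiv ℝ w x (g x), hdw.clm_apply hg, ?_, ?_⟩
  · intro e he x hx
    have : fderiv ℝ w (x + e) = fderiv ℝ w x := by
      rw [← fderiv_comp_add_right]
      refine Filter.EventuallyEq.fderiv_eq ?_
      filter_upwards [hV.mem_nhds hx] with y hy using h2 e he y hy
    simp only [this, hgT e he x hx]
  · intro x hx
    have hα : fderiv ℝ α x = fderiv ℝ (fderiv ℝ w) x := by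
      refine Filter.EventuallyEq.fderiv_eq ?_
      filter_upwards [hV.mem_nhds hx] with y hy using (h3 y hy).symm
    rw [fderiv_clm_apply (diffAt_of hV hdw hx) (diffAt_of hV hg hx)]
    ext v
    simp only [lieF, hα, ← h3 x hx, _root_.add_apply, ContinuousLinearMap.comp_apply,
      ContinuousLinearMap.flip_apply]
    rw [symm_snd hV h1 hx v (g x)]
    ring

lemma lieF_congr {V : Set X} (hV : IsOpen V) (g : X → X) {α β : X → X →L[ℝ] ℝ}
    (he : ∀ x ∈ V, α x = β x) {x : X} (hx : x ∈ V) : lieF g α x = lieF g β x := by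
  have : fderiv ℝ α x = fderiv ℝ β x := by
    refine Filter.EventuallyEq.fderiv_eq ?_
    filter_upwards [hV.mem_nhds hx] with y hy using he y hy
  simp only [lieF, this, he x hx]

lemma lieF_sum {ι : Type*} (g : X → X) (s : Finset ι) {α : ι → X → X →L[ℝ] ℝ} {x : X}
    (h : ∀ i ∈ s, DifferentiableAt ℝ (α i) x) :
    lieF g (fun y => ∑ i ∈ s, α i y) x = ∑ i ∈ s, lieF g (α i) x := by
  simp only [lieF]
  rw [fderiv_fun_sum h, Finset.sum_add_distrib]
  congr 1
  · simp
  · ext v; simp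

lemma lieF_prod {V : Set X} (hV : IsOpen V) (b : X →L[ℝ] X →L[ℝ] ℝ) {g u v : X → X}
    (hg : ContDiffOn ℝ ∞ g V) (hu : ContDiffOn ℝ ∞ u V) (hv : ContDiffOn ℝ ∞ v V) {x : X} (hx : x ∈ V) :
    lieF g (fun y => (b (u y)).comp (fderiv ℝ v y)) x =
      (b (fderiv ℝ u x (g x))).comp (fderiv ℝ v x)
      + (b (u x)).comp (fderiv ℝ (fun y => fderiv ℝ v y (g y)) x) := by
  have hdv : ContDiffOn ℝ ∞ (fderiv ℝ v) V := hv.fderiv_of_isOpen hV (by simp)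
  have h1 : HasFDerivAt (fun y => b (u y)) (b.comp (fderiv ℝ u x)) x :=
    b.hasFDerivAt.comp x (diffAt_of hV hu hx).hasFDerivAt
  have h2 := h1.clm_comp (diffAt_of hV hdv hx).hasFDerivAt
  simp only [lieF]
  rw [h2.fderiv, fderiv_clm_apply (diffAt_of hV hdv hx) (diffAt_of hV hg hx)]
  ext w
  simp
  rw [symm_snd hV hv hx w (g x)]
  ring

/-- pullback coefficients of the one-form `b x` under the formal flow -/
noncomputable def WF {X : Type*} [NormedAddCommGroup X] [NormedSpace ℝ X]
    (b : X →L[ℝ] X →L[ℝ] ℝ) (g : ℕ → X → X) (n m : ℕ) : X → X →L[ℝ] ℝ :=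
  fun x => ∑ q ∈ Finset.HasAntidiagonal.antidiagonal n, ∑ p ∈ Finset.HasAntidiagonal.antidiagonal m,
    (b (fl g q.1 p.1 x)).comp (fderiv ℝ (fl g q.2 p.2) x)

lemma form_smooth {V : Set X} (hV : IsOpen V) (b : X →L[ℝ] X →L[ℝ] ℝ) {u v : X → X}
    (hu : ContDiffOn ℝ ∞ u V) (hv : ContDiffOn ℝ ∞ v V) :
    ContDiffOn ℝ ∞ (fun y => (b (u y)).comp (fderiv ℝ v y)) V :=
  (b.contDiff.comp_contDiffOn hu).clm_comp (hv.fderiv_of_isOpen hV (by simp))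

lemma WF_rec {V : Set X} (hV : IsOpen V) (b : X →L[ℝ] X →L[ℝ] ℝ) {g : ℕ → X → X}
    (hg : ∀ k, ContDiffOn ℝ ∞ (g k) V) (n m : ℕ) {x : X} (hx : x ∈ V) :
    ((n:ℝ)+1) • WF b g (n+1) m x =
      ∑ p ∈ Finset.HasAntidiagonal.antidiagonal m, lieF (g p.1) (WF b g n p.2) x := by
  have hs := fl_smooth hV hg
  let β : X →ₗ[ℝ] (X →L[ℝ] X) →ₗ[ℝ] (X →L[ℝ] ℝ) :=
    LinearMap.mk₂ ℝ (fun a L => (b a).comp L) (by intros; simp [ContinuousLinearMap.add_comp])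
      (by intros; simp [ContinuousLinearMap.smul_comp]) (by intros; simp [ContinuousLinearMap.comp_add])
      (by intros; simp [ContinuousLinearMap.comp_smul])
  have hQs : ∀ k n r, ContDiffOn ℝ ∞ (fun y => fderiv ℝ (fl g n r) y (g k y)) V := fun k n r =>
    ((hs n r).fderiv_of_isOpen hV (by simp)).clm_apply (hg k)
  have key := conv_rec β (fun n j => fl g n j x) (fun n j => fderiv ℝ (fl g n j) x)
    (fun k n r => fderiv ℝ (fl g n r) x (g k x))
    (fun k n r => fderiv ℝ (fun y => fderiv ℝ (fl g n r) y (g k y)) x)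
    (fun n j => fl_rec g n j x)
    (fun n j => by
      rw [← fderiv_fun_const_smul (diffAt_of hV (hs (n+1) j) hx)]
      simp only [fl_rec]
      exact fderiv_fun_sum fun p _ => diffAt_of hV (hQs p.1 n p.2) hx) n m
  refine key.trans ?_
  refine Finset.sum_congr rfl fun p _ => ?_
  unfold WF
  rw [lieF_sum]
  · refine Finset.sum_congr rfl fun q _ => ?_
    rw [lieF_sum]
    · refine Finset.sum_congr rfl fun p' _ => ?_
      rw [lieF_prod hV b (hg _) (hs _ _) (hs _ _) hx]
      rfl
    · intro p' _
      exact diffAt_of hV (form_smooth hV b (hs _ _) (hs _ _)) hx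
  · intro q _
    refine diffAt_of hV ?_ hx
    exact ContDiffOn.sum fun p' _ => form_smooth hV b (hs _ _) (hs _ _)

end PartThree

section PartFour

variable {X : Type*} [NormedAddCommGroup X] [NormedSpace ℝ X]

lemma fderiv_per {Y : Type*} [NormedAddCommGroup Y] [NormedSpace ℝ Y] {V : Set X} (hV : IsOpen V)
    {u : X → Y} {e x : X} (d : Y)
    (h : ∀ y ∈ V, u (y + e) = u y + d) (hx : x ∈ V) : fderiv ℝ u (x + e) = fderiv ℝ u x := by
  rw [← fderiv_comp_add_right]
  have : (fun y => u (y + e)) =ᶠ[𝓝 x] (fun y => u y + d) := by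
    filter_upwards [hV.mem_nhds hx] with y hy using h y hy
  rw [this.fderiv_eq, fderiv_add_const]

lemma fl_per {V : Set X} (hV : IsOpen V) {g : ℕ → X → X} {e : X} (j : ℕ)
    (hgT : ∀ k ≤ j, ∀ x ∈ V, g k (x + e) = g k x) (n : ℕ) :
    ∀ r ≤ j, ∀ x ∈ V, fderiv ℝ (fl g n r) (x + e) = fderiv ℝ (fl g n r) x := by
  induction n with
  | zero =>
    intro r _ x _
    rw [fl]; split_ifs
    · simp
    · simp
  | succ n ih =>
    intro r hr x hx
    refine fderiv_per hV 0 ?_ hx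
    intro y hy
    rw [add_zero, fl]
    beta_reduce
    congr 1
    refine Finset.sum_congr rfl fun p hp => ?_
    have hp' := Finset.HasAntidiagonal.mem_antidiagonal.1 hp
    rw [ih p.2 (by omega) y hy, hgT p.1 (by omega) y hy]

lemma g_per {V : Set X} (hV : IsOpen V) {g : ℕ → X → X} (hg0 : g 0 = 0) {e : X}
    (hF : ∀ j, 1 ≤ j → ∀ x ∈ V, ∑ n ∈ Finset.range (j+1), fl g n j (x + e)
      = ∑ n ∈ Finset.range (j+1), fl g n j x) :
    ∀ j, ∀ x ∈ V, g j (x + e) = g j x := by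
  intro j
  induction j using Nat.strong_induction_on with
  | _ j ih =>
    intro x hx
    rcases Nat.eq_zero_or_pos j with rfl | hj
    · rw [hg0]; rfl
    obtain ⟨j', rfl⟩ := Nat.exists_eq_succ_of_ne_zero hj.ne'
    have h := hF (j'+1) hj x hx
    rw [Finset.sum_range_succ', Finset.sum_range_succ' _ (j'+1),
      Finset.sum_range_succ', Finset.sum_range_succ' _ j'] at h
    have h0 : fl g 0 (j'+1) = 0 := by simp [fl]
    have h2 : ∀ n, fl g (n+1+1) (j'+1) (x + e) = fl g (n+1+1) (j'+1) x := by
      intro n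
      rw [fl]
      beta_reduce
      congr 1
      refine Finset.sum_congr rfl fun p hp => ?_
      have hp' := Finset.HasAntidiagonal.mem_antidiagonal.1 hp
      rcases Nat.eq_zero_or_pos p.1 with h1 | h1
      · rw [h1, hg0]; simp
      rcases Nat.eq_zero_or_pos p.2 with h3 | h3
      · rw [h3, fl_zero hg0 (n+1) 0 (by omega)]; simp
      rw [ih p.1 (by omega) x hx, fl_per hV j' (fun k hk => ih k (by omega)) (n+1) p.2 (by omega) x hx]
    simp only [h0, h2, zero_add, fl_one] at h
    simpa using h

lemma WF_zero_zero (b : X →L[ℝ] X →L[ℝ] ℝ) (g : ℕ → X → X) : WF b g 0 0 = fun x => b x := by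
  funext x
  simp [WF, fl]

lemma WF_zero_succ (b : X →L[ℝ] X →L[ℝ] ℝ) (g : ℕ → X → X) (j : ℕ) (hj : 1 ≤ j) :
    WF b g 0 j = fun _ => 0 := by
  funext x
  simp only [WF]
  refine Finset.sum_eq_zero fun q hq => Finset.sum_eq_zero fun p hp => ?_
  have hp' := Finset.HasAntidiagonal.mem_antidiagonal.1 hp
  have hq' := Finset.HasAntidiagonal.mem_antidiagonal.1 hq
  have hq1 : q.1 = 0 := by omega
  have hq2 : q.2 = 0 := by omega
  rcases Nat.eq_zero_or_pos p.2 with h3 | h3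
  · have : p.1 ≠ 0 := by omega
    simp [hq1, fl, this]
  · simp [hq2, fl, h3.ne']

lemma WF_succ_zero (b : X →L[ℝ] X →L[ℝ] ℝ) {g : ℕ → X → X} (hg0 : g 0 = 0) (n : ℕ) (hn : 1 ≤ n) :
    WF b g n 0 = fun _ => 0 := by
  funext x
  simp only [WF]
  refine Finset.sum_eq_zero fun q hq => Finset.sum_eq_zero fun p hp => ?_
  have hp' := Finset.HasAntidiagonal.mem_antidiagonal.1 hp
  have hq' := Finset.HasAntidiagonal.mem_antidiagonal.1 hq
  have hp1 : p.1 = 0 := by omega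
  have hp2 : p.2 = 0 := by omega
  rcases Nat.eq_zero_or_pos q.2 with h3 | h3
  · rw [hp1, fl_zero hg0 q.1 0 (by omega)]; simp
  · rw [hp2, fl_zero hg0 q.2 0 (by omega)]; simp

lemma lieF_zero_form (g : X → X) : lieF g (fun _ => 0) = fun _ => 0 := by
  funext x; simp [lieF]

lemma lieF_zero_field (α : X → X →L[ℝ] ℝ) : lieF 0 α = fun _ => 0 := by
  funext x; simp [lieF]

lemma lie_exact {T V : Set X} (hV : IsOpen V) (b : X →L[ℝ] X →L[ℝ] ℝ) {g : ℕ → X → X}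
    (hg : ∀ k, ContDiffOn ℝ ∞ (g k) V) (hg0 : g 0 = 0)
    (hgT : ∀ k, ∀ e ∈ T, ∀ x ∈ V, g k (x + e) = g k x)
    (hW : ∀ m, 1 ≤ m → ExactP T V (fun x => ∑ n ∈ Finset.range (m+1), WF b g n m x)) :
    ∀ m, 1 ≤ m → ExactP T V (lieF (g m) (fun x => b x)) := by
  intro m
  induction m using Nat.strong_induction_on with
  | _ m ih =>
  intro hm
  have claim : ∀ n j, 1 ≤ j → (j < m ∨ (j = m ∧ n ≠ 1)) → ExactP T V (WF b g n j) := by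
    intro n
    induction n with
    | zero => intro j hj _; rw [WF_zero_succ b g j hj]; exact ExactP.zero
    | succ n ihn =>
      intro j hj hjm
      have hsum : ExactP T V (fun x => ∑ p ∈ Finset.HasAntidiagonal.antidiagonal j,
          lieF (g p.1) (WF b g n p.2) x) := by
        refine ExactP.sum hV _ fun p hp => ?_
        have hp' := Finset.HasAntidiagonal.mem_antidiagonal.1 hp
        rcases Nat.eq_zero_or_pos p.1 with h1 | h1
        · rw [h1, hg0, lieF_zero_field]; exact ExactP.zero
        rcases Nat.eq_zero_or_pos p.2 with h2 | h2
        · rcases Nat.eq_zero_or_pos n with h3 | h3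
          · rw [h2, h3, WF_zero_zero]
            exact ih p.1 (by omega) h1
          · rw [h2, WF_succ_zero b hg0 n h3, lieF_zero_form]; exact ExactP.zero
        · exact (ihn p.2 h2 (by omega)).lie hV (hg p.1) (hgT p.1)
      refine (hsum.smul hV (((n:ℝ)+1)⁻¹)).congr fun x hx => ?_
      rw [← WF_rec hV b hg n j hx, smul_smul, inv_mul_cancel₀ (by positivity), one_smul]
  obtain ⟨m', rfl⟩ := Nat.exists_eq_succ_of_ne_zero (Nat.one_le_iff_ne_zero.1 hm)
  have h1 := hW (m'+1) hm
  have h2 : ExactP T V (fun x => ∑ n ∈ Finset.range m', WF b g (n+1+1) (m'+1) x) :=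
    ExactP.sum hV _ fun n _ => claim (n+1+1) (m'+1) hm (Or.inr ⟨rfl, by omega⟩)
  refine (h1.add hV (h2.smul hV (-1))).congr fun x hx => ?_
  rw [Finset.sum_range_succ', Finset.sum_range_succ', WF_zero_succ b g _ hm]
  have h3 := WF_rec hV b hg 0 (m'+1) hx
  rw [Finset.sum_eq_single (m'+1, 0)] at h3
  · rw [WF_zero_zero] at h3
    simp only [Nat.cast_zero, zero_add, one_smul] at h3
    simp only [← h3]
    simp only [zero_add, add_zero]
    ext v
    simp only [_root_.add_apply, _root_.smul_apply, smul_eq_mul]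
    ring
  · intro p hp hne
    have hp' := Finset.HasAntidiagonal.mem_antidiagonal.1 hp
    have : p.2 ≠ 0 := by
      intro h0; apply hne; ext <;> simp <;> omega
    rw [WF_zero_succ b g p.2 (by omega), lieF_zero_form]
  · intro h; exact absurd (Finset.HasAntidiagonal.mem_antidiagonal.2 (by simp)) h

/-- rewriting the pullback coefficient in terms of the total coefficients -/
lemma WF_total {V : Set X} (hV : IsOpen V) (b : X →L[ℝ] X →L[ℝ] ℝ) {g : ℕ → X → X}
    (hg : ∀ k, ContDiffOn ℝ ∞ (g k) V) (hg0 : g 0 = 0) {F : ℕ → X → X}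
    (hF : ∀ j, ∀ x ∈ V, F j x = ∑ n ∈ Finset.range (j+1), fl g n j x) (m : ℕ) {x : X} (hx : x ∈ V) :
    ∑ n ∈ Finset.range (m+1), WF b g n m x =
    ∑ p ∈ Finset.HasAntidiagonal.antidiagonal m, (b (F p.1 x)).comp (fderiv ℝ (F p.2) x) := by
  have hF' : ∀ j ≤ m, ∀ x ∈ V, F j x = ∑ n ∈ Finset.range (m+1), fl g n j x := by
    intro j hj x hx
    rw [hF j x hx]
    refine Finset.sum_subset (by intro n; simp; omega) fun n _ hn => ?_
    rw [fl_zero hg0 n j (by simpa using hn)]; rfl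
  have hdF : ∀ j ≤ m, fderiv ℝ (F j) x = ∑ n ∈ Finset.range (m+1), fderiv ℝ (fl g n j) x := by
    intro j hj
    have : F j =ᶠ[𝓝 x] (fun y => ∑ n ∈ Finset.range (m+1), fl g n j y) := by
      filter_upwards [hV.mem_nhds hx] with y hy using hF' j hj y hy
    rw [this.fderiv_eq]
    exact fderiv_fun_sum fun n _ => diffAt_of hV (fl_smooth hV hg n j) hx
  have h1 : ∀ p ∈ Finset.HasAntidiagonal.antidiagonal m, (b (F p.1 x)).comp (fderiv ℝ (F p.2) x) =
      ∑ q ∈ Finset.range (m+1) ×ˢ Finset.range (m+1),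
        (b (fl g q.1 p.1 x)).comp (fderiv ℝ (fl g q.2 p.2) x) := by
    intro p hp
    have hp' := Finset.HasAntidiagonal.mem_antidiagonal.1 hp
    rw [hF' p.1 (by omega) x hx, hdF p.2 (by omega), Finset.sum_product]
    ext v
    simp only [map_sum, ContinuousLinearMap.comp_apply, _root_.sum_apply]
    rw [Finset.sum_comm]
  rw [Finset.sum_congr rfl h1, Finset.sum_comm, sum_split, Finset.sum_eq_zero (s := Finset.filter _ _), add_zero]
  · rfl
  · intro q hq
    have hq' : m + 1 ≤ q.1 + q.2 := by simpa using (Finset.mem_filter.1 hq).2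
    refine Finset.sum_eq_zero fun p hp => ?_
    have hp' := Finset.HasAntidiagonal.mem_antidiagonal.1 hp
    by_cases h : p.1 < q.1
    · rw [fl_zero hg0 q.1 p.1 h]; simp
    · rw [fl_zero hg0 q.2 p.2 (by omega)]; simp

end PartFour

section PartFive

variable {X Y : Type*} [NormedAddCommGroup X] [NormedSpace ℝ X]
  [NormedAddCommGroup Y] [NormedSpace ℝ Y]

lemma bigO_bilin {α : Type*} {l : Filter α} (B : X →L[ℝ] Y →L[ℝ] ℝ) {u : α → X} {v : α → Y}
    {φ ψ : α → ℝ} (hu : u =O[l] φ) (hv : v =O[l] ψ) :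
    (fun z => B (u z) (v z)) =O[l] (fun z => φ z * ψ z) := by
  have h1 := hu.norm_norm.mul hv.norm_norm
  have h2 : (fun z => B (u z) (v z)) =O[l] (fun z => ‖u z‖ * ‖v z‖) := by
    refine IsBigO.of_bound ‖B‖ (Eventually.of_forall fun z => ?_)
    rw [norm_mul, norm_norm, norm_norm, ← mul_assoc]
    exact B.le_opNorm₂ _ _
  refine h2.trans (h1.trans ?_)
  refine IsBigO.of_bound 1 (Eventually.of_forall fun z => ?_)
  simp

lemma HasExp.bilin {α : Type*} {l : Filter α} {μ : α → ℝ} (hμ : μ =O[l] (fun _ => (1 : ℝ))) {m : ℕ}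
    (B : X →L[ℝ] Y →L[ℝ] ℝ)
    {u : α → X} {v : α → Y} {a : ℕ → α → X} {b : ℕ → α → Y}
    (hu : HasExp l μ m u a) (hv : HasExp l μ m v b)
    (ha : ∀ j, a j =O[l] (fun _ => (1 : ℝ))) (hb : ∀ j, b j =O[l] (fun _ => (1 : ℝ))) :
    HasExp l μ m (fun z => B (u z) (v z))
      (fun j z => ∑ p ∈ Finset.HasAntidiagonal.antidiagonal j, B (a p.1 z) (b p.2 z)) := by
  unfold HasExp at *
  have hpow : ∀ n : ℕ, (fun z => μ z ^ n) =O[l] (fun _ => (1 : ℝ)) := by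
    intro n
    simpa using hμ.pow n
  have hsumb : (fun z => ∑ j ∈ Finset.range m, μ z ^ j • b j z) =O[l] (fun _ => (1 : ℝ)) := by
    refine IsBigO.fun_sum fun j _ => ?_
    simpa using (hpow j).smul (hb j)
  have hsuma : (fun z => ∑ j ∈ Finset.range m, μ z ^ j • a j z) =O[l] (fun _ => (1 : ℝ)) := by
    refine IsBigO.fun_sum fun j _ => ?_
    simpa using (hpow j).smul (ha j)
  have hv1 : v =O[l] (fun _ => (1 : ℝ)) := by
    have := (hv.trans (hpow m)).add hsumb
    simpa using this
  have h1 := bigO_bilin B hu hv1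
  have h2 := bigO_bilin B hsuma hv
  have h3 : (fun z => ∑ p ∈ (Finset.range m ×ˢ Finset.range m).filter (fun p => ¬ p.1 + p.2 < m),
      μ z ^ (p.1 + p.2) * (B (a p.1 z) (b p.2 z))) =O[l] (fun z => μ z ^ m) := by
    refine IsBigO.fun_sum fun p hp => ?_
    have hp' : m ≤ p.1 + p.2 := by simpa using (Finset.mem_filter.1 hp).2
    obtain ⟨k, hk⟩ := Nat.exists_eq_add_of_le hp'
    have := (isBigO_refl (fun z => μ z ^ m) l).mul ((hpow k).mul (bigO_bilin B (ha p.1) (hb p.2)))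
    simpa [hk, pow_add, mul_assoc] using this
  have key : ∀ z, B (u z) (v z) - ∑ j ∈ Finset.range m, μ z ^ j •
        ∑ p ∈ Finset.HasAntidiagonal.antidiagonal j, B (a p.1 z) (b p.2 z)
      = B (u z - ∑ j ∈ Finset.range m, μ z ^ j • a j z) (v z)
        + B (∑ j ∈ Finset.range m, μ z ^ j • a j z) (v z - ∑ j ∈ Finset.range m, μ z ^ j • b j z)
        + ∑ p ∈ (Finset.range m ×ˢ Finset.range m).filter (fun p => ¬ p.1 + p.2 < m),
            μ z ^ (p.1 + p.2) * (B (a p.1 z) (b p.2 z)) := by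
    intro z
    have e1 : B (∑ j ∈ Finset.range m, μ z ^ j • a j z) (∑ j ∈ Finset.range m, μ z ^ j • b j z)
        = ∑ p ∈ (Finset.range m ×ˢ Finset.range m), μ z ^ (p.1 + p.2) * (B (a p.1 z) (b p.2 z)) := by
      rw [Finset.sum_product, map_sum B, _root_.sum_apply]
      refine Finset.sum_congr rfl fun i _ => ?_
      rw [map_sum]
      refine Finset.sum_congr rfl fun j _ => ?_
      simp only [map_smul, _root_.smul_apply, smul_eq_mul, pow_add]; ring
    have e2 : ∑ j ∈ Finset.range m, μ z ^ j • ∑ p ∈ Finset.HasAntidiagonal.antidiagonal j, B (a p.1 z) (b p.2 z)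
        = ∑ p ∈ (Finset.range m ×ˢ Finset.range m).filter (fun p => p.1 + p.2 < m),
            μ z ^ (p.1 + p.2) * (B (a p.1 z) (b p.2 z)) := by
      rw [← Finset.sum_fiberwise_of_maps_to (g := fun p : ℕ × ℕ => p.1 + p.2) (t := Finset.range m)
        (by intro p hp; simpa using (Finset.mem_filter.1 hp).2)]
      refine Finset.sum_congr rfl fun j hj => ?_
      rw [smul_eq_mul, Finset.mul_sum]
      have hj' := Finset.mem_range.1 hj
      refine Finset.sum_congr ?_ ?_
      · ext p
        simp only [Finset.HasAntidiagonal.mem_antidiagonal, Finset.mem_filter, Finset.mem_product, Finset.mem_range]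
        omega
      · intro p hp
        have : p.1 + p.2 = j := by simpa using (Finset.mem_filter.1 hp).2
        rw [this]
    have e3 := Finset.sum_filter_add_sum_filter_not (Finset.range m ×ˢ Finset.range m)
      (fun p : ℕ × ℕ => p.1 + p.2 < m) (fun p => μ z ^ (p.1 + p.2) * (B (a p.1 z) (b p.2 z)))
    rw [e2, map_sub, map_sub, _root_.sub_apply]
    linear_combination e1 - e3
  simp only [key]
  refine IsBigO.add (IsBigO.add ?_ ?_) h3
  · simpa using h1
  · simpa using h2

/-- Taylor coefficients of the family -/
noncomputable def Fc {X : Type*} [NormedAddCommGroup X] [NormedSpace ℝ X]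
    (f : ℝ → X → X) (j : ℕ) (x : X) : X :=
  (Nat.factorial j : ℝ)⁻¹ • (dirD ((0:X),(1:ℝ)))^[j] (fun z : X × ℝ => f z.2 z.1) (x, 0)


lemma Fc_smooth {V : Set X} (hV : IsOpen V) {δ : ℝ} (hδ : 0 < δ) {f : ℝ → X → X}
    (hf : ContDiffOn ℝ ∞ (fun z : X × ℝ => f z.2 z.1) (V ×ˢ Metric.ball (0:ℝ) δ))
    (j : ℕ) : ContDiffOn ℝ ∞ (Fc f j) V := by
  unfold Fc
  refine contDiffOn_const.smul ?_
  have h := dirD_iter_smooth (hV.prod Metric.isOpen_ball) hf ((0:X),(1:ℝ)) j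
  refine h.comp (g := (dirD ((0:X),(1:ℝ)))^[j] (fun z : X × ℝ => f z.2 z.1))
    (f := fun x : X => (x, (0:ℝ))) (by fun_prop) ?_
  intro x hx
  exact ⟨hx, Metric.mem_ball_self hδ⟩

lemma fderiv_slice {V : Set X} (hV : IsOpen V) {δ : ℝ} (hδ : 0 < δ) {f : ℝ → X → X}
    (hf : ContDiffOn ℝ ∞ (fun z : X × ℝ => f z.2 z.1) (V ×ˢ Metric.ball (0:ℝ) δ))
    {x : X} (hx : x ∈ V) {μ : ℝ} (hμ : |μ| < δ) (w : X) :
    fderiv ℝ (f μ) x w = dirD (w, (0:ℝ)) (fun z : X × ℝ => f z.2 z.1) (x, μ) := by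
  have h1 := (diffAt_of (hV.prod Metric.isOpen_ball) hf (x := (x, μ)) ⟨hx, by simpa using hμ⟩).hasFDerivAt
  have h2 : HasFDerivAt (fun y : X => (y, μ)) (ContinuousLinearMap.inl ℝ X ℝ) x := by
    exact hasFDerivAt_prodMk_left x μ
  have h3 := h1.comp x h2
  have h4 : fderiv ℝ (f μ) x = _ := h3.fderiv
  rw [h4]; simp [dirD]

lemma fderiv_Fc {V : Set X} (hV : IsOpen V) {δ : ℝ} (hδ : 0 < δ) {f : ℝ → X → X}
    (hf : ContDiffOn ℝ ∞ (fun z : X × ℝ => f z.2 z.1) (V ×ˢ Metric.ball (0:ℝ) δ))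
    (j : ℕ) {x : X} (hx : x ∈ V) (w : X) :
    fderiv ℝ (Fc f j) x w = (Nat.factorial j : ℝ)⁻¹ •
      (dirD ((0:X),(1:ℝ)))^[j] (dirD (w, (0:ℝ)) (fun z : X × ℝ => f z.2 z.1)) (x, 0) := by
  have hU : IsOpen (V ×ˢ Metric.ball (0:ℝ) δ) := hV.prod Metric.isOpen_ball
  have hm : (x, (0:ℝ)) ∈ V ×ˢ Metric.ball (0:ℝ) δ := ⟨hx, Metric.mem_ball_self hδ⟩
  rw [dirD_iter_comm hU hf _ _ j hm]
  have hs := dirD_iter_smooth hU hf ((0:X),(1:ℝ)) j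
  have h1 := (diffAt_of hU hs hm).hasFDerivAt
  have h2 : HasFDerivAt (fun y : X => (y, (0:ℝ))) (ContinuousLinearMap.inl ℝ X ℝ) x :=
    hasFDerivAt_prodMk_left x 0
  have h3 := (h1.comp x h2).const_smul ((Nat.factorial j : ℝ)⁻¹)
  have h4 : fderiv ℝ (Fc f j) x = _ := h3.fderiv
  rw [h4]; simp [dirD]

/-- the filter used for uniform expansions -/
abbrev ufil {X : Type*} (K : Set X) : Filter (ℝ × X) := 𝓝[>] (0:ℝ) ×ˢ 𝓟 K

lemma ufil_mem {δ : ℝ} (hδ : 0 < δ) {K : Set X} {ε : ℝ} (hε : 0 < ε) : ∀ᶠ z : ℝ × X in ufil K, z.1 ∈ Ioo 0 ε ∧ z.2 ∈ K := by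
  have h1 : ∀ᶠ μ : ℝ in 𝓝[>] 0, μ ∈ Ioo 0 ε := Ioo_mem_nhdsGT hε
  exact h1.prod_mk (mem_principal_self K)

lemma exp_f {V : Set X} (hV : IsOpen V) {δ : ℝ} (hδ : 0 < δ) {f : ℝ → X → X}
    (hf : ContDiffOn ℝ ∞ (fun z : X × ℝ => f z.2 z.1) (V ×ˢ Metric.ball (0:ℝ) δ))
    {K : Set X} (hK : IsCompact K) (hKV : K ⊆ V) (m : ℕ) :
    HasExp (ufil K) (fun z => z.1) m (fun z => f z.1 z.2) (fun j z => Fc f j z.2) := by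
  obtain ⟨C, hC⟩ := taylor_unif hV hK hKV m hf (δ/2) (by linarith)
  refine IsBigO.of_bound C ?_
  filter_upwards [ufil_mem hδ (K := K) (half_pos hδ)] with z hz
  have := hC z.2 hz.2 z.1 ⟨hz.1.1.le, hz.1.2.le⟩
  rw [Real.norm_of_nonneg (pow_nonneg hz.1.1.le _)]
  exact this

lemma exp_df {V : Set X} (hV : IsOpen V) {δ : ℝ} (hδ : 0 < δ) {f : ℝ → X → X}
    (hf : ContDiffOn ℝ ∞ (fun z : X × ℝ => f z.2 z.1) (V ×ˢ Metric.ball (0:ℝ) δ))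
    {K : Set X} (hK : IsCompact K) (hKV : K ⊆ V) (m : ℕ) (w : X) :
    HasExp (ufil K) (fun z => z.1) m (fun z => fderiv ℝ (f z.1) z.2 w)
      (fun j z => fderiv ℝ (Fc f j) z.2 w) := by
  obtain ⟨C, hC⟩ := taylor_unif hV hK hKV m
    (dirD_smooth (hV.prod Metric.isOpen_ball) hf (w, (0:ℝ))) (δ/2) (by linarith)
  refine IsBigO.of_bound C ?_
  filter_upwards [ufil_mem hδ (K := K) (half_pos hδ)] with z hz
  have := hC z.2 hz.2 z.1 ⟨hz.1.1.le, hz.1.2.le⟩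
  rw [Real.norm_of_nonneg (pow_nonneg hz.1.1.le _)]
  rw [fderiv_slice hV hδ hf (hKV hz.2) (by rw [abs_of_pos hz.1.1]; linarith [hz.1.2])]
  simp only [fderiv_Fc hV hδ hf _ (hKV hz.2) w]
  exact this

lemma bigO_one_of_cont {K : Set X} (hK : IsCompact K) {F : X → Y} (hF : ContinuousOn F K) :
    (fun z : ℝ × X => F z.2) =O[ufil K] (fun _ => (1:ℝ)) := by
  obtain ⟨C, hC⟩ := hK.exists_bound_of_continuousOn hF
  refine IsBigO.of_bound C ?_
  filter_upwards [ufil_mem one_pos (K := K) one_pos] with z hz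
  simpa using hC z.2 hz.2

lemma mu_bigO {K : Set X} : (fun z : ℝ × X => z.1) =O[ufil K] (fun _ => (1:ℝ)) := by
  refine IsBigO.of_bound 1 ?_
  filter_upwards [ufil_mem one_pos (K := K) one_pos] with z hz
  simp [abs_of_pos hz.1.1, hz.1.2.le]

lemma Fc_bigO {V : Set X} (hV : IsOpen V) {δ : ℝ} (hδ : 0 < δ) {f : ℝ → X → X}
    (hf : ContDiffOn ℝ ∞ (fun z : X × ℝ => f z.2 z.1) (V ×ˢ Metric.ball (0:ℝ) δ))
    {K : Set X} (hK : IsCompact K) (hKV : K ⊆ V) (j : ℕ) :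
    (fun z : ℝ × X => Fc f j z.2) =O[ufil K] (fun _ => (1:ℝ)) :=
  bigO_one_of_cont hK ((Fc_smooth hV hδ hf j).continuousOn.mono hKV)

lemma dFc_cont {V : Set X} (hV : IsOpen V) {δ : ℝ} (hδ : 0 < δ) {f : ℝ → X → X}
    (hf : ContDiffOn ℝ ∞ (fun z : X × ℝ => f z.2 z.1) (V ×ˢ Metric.ball (0:ℝ) δ))
    (j : ℕ) (w : X) : ContinuousOn (fun x => fderiv ℝ (Fc f j) x w) V :=
  (((Fc_smooth hV hδ hf j).fderiv_of_isOpen hV (m := ∞) (by simp)).continuousOn).clm_apply continuousOn_const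

lemma dFc_bigO {V : Set X} (hV : IsOpen V) {δ : ℝ} (hδ : 0 < δ) {f : ℝ → X → X}
    (hf : ContDiffOn ℝ ∞ (fun z : X × ℝ => f z.2 z.1) (V ×ˢ Metric.ball (0:ℝ) δ))
    {K : Set X} (hK : IsCompact K) (hKV : K ⊆ V) (j : ℕ) (w : X) :
    (fun z : ℝ × X => fderiv ℝ (Fc f j) z.2 w) =O[ufil K] (fun _ => (1:ℝ)) :=
  bigO_one_of_cont hK ((dFc_cont hV hδ hf j w).mono hKV)

lemma HasExp.at_point {m : ℕ} {u : ℝ × X → Y} {a : ℕ → ℝ × X → Y} {K : Set X}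
    (h : HasExp (ufil K) (fun z => z.1) m u a) {x : X} (hx : x ∈ K) :
    HasExp (𝓝[>] (0:ℝ)) (fun μ => μ) m (fun μ => u (μ, x)) (fun j μ => a j (μ, x)) := by
  have ht : Tendsto (fun μ : ℝ => (μ, x)) (𝓝[>] 0) (ufil K) :=
    tendsto_id.prodMk (tendsto_principal.2 (Eventually.of_forall fun _ => hx))
  exact IsBigO.comp_tendsto h ht

/-- two expansions of the same function have the same coefficients -/
lemma HasExp.unique {m : ℕ} {u v : ℝ → Y} {a b : ℕ → Y}
    (h : HasExp (𝓝[>] (0:ℝ)) (fun μ => μ) m u (fun j _ => a j))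
    (h' : HasExp (𝓝[>] (0:ℝ)) (fun μ => μ) m v (fun j _ => b j))
    (e : (fun μ => u μ - v μ) =O[𝓝[>] 0] (fun μ : ℝ => μ ^ m)) : ∀ j < m, a j = b j := by
  intro j hj
  have := exp_unique m (fun j => a j - b j) (by
    have h3 := (e.sub h).add h'
    refine h3.congr_left fun μ => ?_
    simp only [smul_sub, Finset.sum_sub_distrib]
    abel) j hj
  exact sub_eq_zero.1 this

/-- Poincare lemma with vanishing periods -/
lemma exactP_of {T V : Set X} (hV : IsOpen V) (hc : Convex ℝ V) {α : X → X →L[ℝ] ℝ}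
    (hα : ContDiffOn ℝ ∞ α V)
    (hs : ∀ a ∈ V, ∀ x y, fderiv ℝ α a x y = fderiv ℝ α a y x)
    (hT : ∀ e ∈ T, ∀ x ∈ V, ∀ t : ℝ, x + t • e ∈ V)
    (hp : ∀ e ∈ T, ∀ x ∈ V, ∫ t in (0:ℝ)..1, α (x + t • e) e = 0) : ExactP T V α := by
  obtain ⟨w, hw⟩ := hc.exists_forall_hasFDerivAt_of_fderiv_symmetric hV
    (hα.differentiableOn (by simp)) hs
  refine ⟨w, ?_, ?_, fun x hx => (hw x hx).fderiv⟩
  · rw [contDiffOn_infty_iff_fderiv_of_isOpen hV]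
    refine ⟨fun x hx => (hw x hx).differentiableAt.differentiableWithinAt, ?_⟩
    exact hα.congr fun x hx => (hw x hx).fderiv
  · intro e he x hx
    have h1 : ∀ t : ℝ, HasDerivAt (fun t : ℝ => w (x + t • e)) (α (x + t • e) e) t := by
      intro t
      have h2 : HasDerivAt (fun t : ℝ => x + t • e) e t := by
        simpa using ((hasDerivAt_id t).smul_const e).const_add x
      exact (hw _ (hT e he x hx t)).comp_hasDerivAt t h2
    have hcont : Continuous (fun t : ℝ => α (x + t • e) e) := by
      have : Continuous (fun t : ℝ => α (x + t • e)) :=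
        hα.continuousOn.comp_continuous (by fun_prop) (hT e he x hx)
      exact this.clm_apply continuous_const
    have h3 := intervalIntegral.integral_eq_sub_of_hasDerivAt (a := 0) (b := 1)
      (fun t _ => h1 t) (hcont.intervalIntegrable 0 1)
    rw [hp e he x hx] at h3
    simp at h3
    linarith

end PartFive

section PartSix

variable {X Y : Type*} [NormedAddCommGroup X] [NormedSpace ℝ X]
  [NormedAddCommGroup Y] [NormedSpace ℝ Y]

lemma HasExp.unique_const {m : ℕ} {u v : ℝ → Y} {a b : ℕ → Y} {c : Y}
    (h : HasExp (𝓝[>] (0:ℝ)) (fun μ => μ) m u (fun j _ => a j))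
    (h' : HasExp (𝓝[>] (0:ℝ)) (fun μ => μ) m v (fun j _ => b j))
    (e : ∀ᶠ μ : ℝ in 𝓝[>] 0, u μ - v μ = c) : ∀ j < m, 1 ≤ j → a j = b j := by
  intro j hj hj1
  have hm : 0 < m := by omega
  have := exp_unique m (fun j => a j - b j - if j = 0 then c else 0) (by
    have h3 := (h'.sub h)
    refine h3.congr' ?_ EventuallyEq.rfl
    filter_upwards [e] with μ hμ
    simp only [smul_sub, Finset.sum_sub_distrib]
    have : ∑ x ∈ Finset.range m, μ ^ x • (if x = 0 then c else 0) = c := by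
      rw [Finset.sum_eq_single 0]
      · simp
      · intro i _ hi; simp [hi]
      · intro h; simp at h; omega
    rw [this, ← hμ]
    abel) j hj
  simp only [show j ≠ 0 by omega, if_false, sub_zero] at this
  exact sub_eq_zero.1 this

lemma HasExp.integral {m : ℕ} {K : Set X} {u : ℝ × X → ℝ} {a : ℕ → X → ℝ} {c : ℝ → X}
    (h : HasExp (ufil K) (fun z => z.1) m u (fun j z => a j z.2))
    (hc : ∀ t ∈ Icc (0:ℝ) 1, c t ∈ K)
    (hu : ∀ᶠ μ : ℝ in 𝓝[>] 0, IntervalIntegrable (fun t => u (μ, c t)) MeasureTheory.volume 0 1)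
    (ha : ∀ j, IntervalIntegrable (fun t => a j (c t)) MeasureTheory.volume 0 1) :
    HasExp (𝓝[>] (0:ℝ)) (fun μ => μ) m (fun μ => ∫ t in (0:ℝ)..1, u (μ, c t))
      (fun j _ => ∫ t in (0:ℝ)..1, a j (c t)) := by
  obtain ⟨C, hC⟩ := IsBigO.bound h
  rw [eventually_prod_principal_iff] at hC
  refine IsBigO.of_bound C ?_
  filter_upwards [hC, hu] with μ h1 h2
  have e : (∫ t in (0:ℝ)..1, u (μ, c t)) - ∑ j ∈ Finset.range m, μ ^ j • ∫ t in (0:ℝ)..1, a j (c t)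
      = ∫ t in (0:ℝ)..1, (u (μ, c t) - ∑ j ∈ Finset.range m, μ ^ j • a j (c t)) := by
    rw [intervalIntegral.integral_sub h2, intervalIntegral.integral_finsetSum]
    · simp only [intervalIntegral.integral_smul]
    · intro j _; exact (ha j).const_mul _
    · have := IntervalIntegrable.sum (Finset.range m) (f := fun j t => μ ^ j • a j (c t))
        (fun j _ => (ha j).const_mul _)
      refine this.congr ?_
      intro t _; simp
  rw [e]
  refine (intervalIntegral.norm_integral_le_of_norm_le_const (C := C * ‖μ ^ m‖) ?_).trans ?_
  · intro t ht
    rw [uIoc_of_le zero_le_one] at ht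
    exact h1 (c t) (hc t ⟨ht.1.le, ht.2⟩)
  · simp


/-- the Taylor coefficients are the formal flow coefficients -/
lemma Fc_eq {V : Set X} (hV : IsOpen V) {δ : ℝ} (hδ : 0 < δ) {f : ℝ → X → X}
    (hf : ContDiffOn ℝ ∞ (fun z : X × ℝ => f z.2 z.1) (V ×ˢ Metric.ball (0:ℝ) δ))
    [ProperSpace X] {g : ℕ → X → X} (hg : ∀ k, ContDiffOn ℝ ∞ (g k) V) (hg0 : g 0 = 0)
    (hI : ∀ m, ∀ x ∈ V, ∃ C, ∃ μ' > (0:ℝ), ∀ μ ∈ Ioo 0 μ', ∃ γ : ℝ → X, γ 0 = x ∧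
      (∀ t ∈ Icc (0:ℝ) 1, HasDerivAt γ (∑ k ∈ Finset.range (m+1), μ ^ k • g k (γ t)) t) ∧
      ‖f μ x - γ 1‖ ≤ C * μ ^ (m+1)) (j : ℕ) {x : X} (hx : x ∈ V) :
    Fc f j x = ∑ n ∈ Finset.range (j+1), fl g n j x := by
  have h1 := (exp_f hV hδ hf isCompact_singleton (singleton_subset_iff.2 hx) (j+1)).at_point
    (mem_singleton x)
  obtain ⟨C, μ', hμ', hC⟩ := hI j x hx
  obtain ⟨C', δ', hδ', hC'⟩ := traj_est hV hg hg0 hx (j+1) (by omega)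
  have h2 : HasExp (𝓝[>] (0:ℝ)) (fun μ => μ) (j+1)
      (fun μ => ∑ i ∈ Finset.range (j+1), μ ^ i • ∑ n ∈ Finset.range (j+1+1), fl g n i x)
      (fun i _ => ∑ n ∈ Finset.range (j+1+1), fl g n i x) := by
    unfold HasExp; simp only [sub_self]; exact isBigO_zero _ _
  have := HasExp.unique (u := fun μ => f μ x) (a := fun i => Fc f i x) h1 h2 (by
    refine IsBigO.of_bound (C + C') ?_
    filter_upwards [Ioo_mem_nhdsGT hμ', Ioo_mem_nhdsGT hδ'] with μ h3 h4
    obtain ⟨γ, g0, g1, g2⟩ := hC μ h3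
    have g3 := hC' μ h4 γ g0 g1
    rw [Real.norm_of_nonneg (pow_nonneg h3.1.le _), add_mul]
    refine le_trans (le_of_eq ?_) ((norm_add_le _ _).trans (add_le_add g2 g3))
    congr 1
    abel) j (by omega)
  rw [this, Finset.sum_range_succ, fl_zero hg0 (j+1) j (by omega)]
  simp

lemma Fc_per {V : Set X} (hV : IsOpen V) {δ : ℝ} (hδ : 0 < δ) {f : ℝ → X → X}
    (hf : ContDiffOn ℝ ∞ (fun z : X × ℝ => f z.2 z.1) (V ×ˢ Metric.ball (0:ℝ) δ))
    {e : X} (hVe : ∀ x ∈ V, x + e ∈ V)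
    (hl : ∀ μ ∈ Ioo 0 δ, ∀ x ∈ V, f μ (x + e) = f μ x + e) (j : ℕ) (hj : 1 ≤ j) {x : X} (hx : x ∈ V) :
    Fc f j (x + e) = Fc f j x := by
  have h1 := (exp_f hV hδ hf isCompact_singleton (singleton_subset_iff.2 hx) (j+1)).at_point
    (mem_singleton x)
  have h2 := (exp_f hV hδ hf isCompact_singleton (singleton_subset_iff.2 (hVe x hx)) (j+1)).at_point
    (mem_singleton (x+e))
  refine HasExp.unique_const (m := j+1) (u := fun μ => f μ (x+e)) (v := fun μ => f μ x)
    (a := fun i => Fc f i (x+e)) (b := fun i => Fc f i x) (c := e) h2 h1 ?_ j (by omega) hj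
  filter_upwards [Ioo_mem_nhdsGT hδ] with μ hμ
  rw [hl μ hμ x hx]; abel

/-- pullback of the one-form, total coefficient -/
noncomputable def WT {X : Type*} [NormedAddCommGroup X] [NormedSpace ℝ X]
    (b : X →L[ℝ] X →L[ℝ] ℝ) (f : ℝ → X → X) (m : ℕ) : X → X →L[ℝ] ℝ :=
  fun x => ∑ p ∈ Finset.HasAntidiagonal.antidiagonal m, (b (Fc f p.1 x)).comp (fderiv ℝ (Fc f p.2) x)

lemma WT_smooth {V : Set X} (hV : IsOpen V) {δ : ℝ} (hδ : 0 < δ) {f : ℝ → X → X}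
    (hf : ContDiffOn ℝ ∞ (fun z : X × ℝ => f z.2 z.1) (V ×ˢ Metric.ball (0:ℝ) δ))
    (b : X →L[ℝ] X →L[ℝ] ℝ) (m : ℕ) : ContDiffOn ℝ ∞ (WT b f m) V :=
  ContDiffOn.sum fun p _ => form_smooth hV b (Fc_smooth hV hδ hf p.1) (Fc_smooth hV hδ hf p.2)

lemma WT_closed {V : Set X} (hV : IsOpen V) {δ : ℝ} (hδ : 0 < δ) {f : ℝ → X → X}
    (hf : ContDiffOn ℝ ∞ (fun z : X × ℝ => f z.2 z.1) (V ×ˢ Metric.ball (0:ℝ) δ))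
    (b : X →L[ℝ] X →L[ℝ] ℝ)
    (hs : ∀ μ ∈ Ioo 0 δ, ∀ x ∈ V, ∀ v w, b (fderiv ℝ (f μ) x v) (fderiv ℝ (f μ) x w)
      - b (fderiv ℝ (f μ) x w) (fderiv ℝ (f μ) x v) = b v w - b w v)
    (m : ℕ) (hm : 1 ≤ m) {x : X} (hx : x ∈ V) (v w : X) :
    fderiv ℝ (WT b f m) x v w = fderiv ℝ (WT b f m) x w v := by
  have hF := Fc_smooth hV hδ hf
  have hd : ∀ j, ContDiffOn ℝ ∞ (fderiv ℝ (Fc f j)) V :=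
    fun j => (hF j).fderiv_of_isOpen hV (by simp)
  have hform : ∀ v w : X, fderiv ℝ (WT b f m) x v w =
      ∑ p ∈ Finset.HasAntidiagonal.antidiagonal m,
        (b (fderiv ℝ (Fc f p.1) x v) (fderiv ℝ (Fc f p.2) x w)
        + b (Fc f p.1 x) (fderiv ℝ (fderiv ℝ (Fc f p.2)) x v w)) := by
    intro v w
    unfold WT
    rw [fderiv_fun_sum fun p _ => diffAt_of hV (form_smooth hV b (hF p.1) (hF p.2)) hx]
    rw [_root_.sum_apply, _root_.sum_apply]
    refine Finset.sum_congr rfl fun p _ => ?_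
    have h1 : HasFDerivAt (fun y => b (Fc f p.1 y)) (b.comp (fderiv ℝ (Fc f p.1) x)) x :=
      b.hasFDerivAt.comp x (diffAt_of hV (hF p.1) hx).hasFDerivAt
    have h2 := h1.clm_comp (diffAt_of hV (hd p.2) hx).hasFDerivAt
    rw [h2.fderiv]
    simp
    ring
  have hK : IsCompact ({x} : Set X) := isCompact_singleton
  have hKV : ({x} : Set X) ⊆ V := singleton_subset_iff.2 hx
  have hE : ∀ v w : X, HasExp (𝓝[>] (0:ℝ)) (fun μ => μ) (m+1)
      (fun μ => b (fderiv ℝ (f μ) x v) (fderiv ℝ (f μ) x w))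
      (fun j _ => ∑ p ∈ Finset.HasAntidiagonal.antidiagonal j,
        b (fderiv ℝ (Fc f p.1) x v) (fderiv ℝ (Fc f p.2) x w)) := fun v w =>
    (HasExp.bilin mu_bigO b (exp_df hV hδ hf hK hKV (m+1) v) (exp_df hV hδ hf hK hKV (m+1) w)
      (fun j => dFc_bigO hV hδ hf hK hKV j v) (fun j => dFc_bigO hV hδ hf hK hKV j w)).at_point
      (mem_singleton x)
  have key := HasExp.unique_const (c := b v w - b w v) (hE v w) (hE w v) (by
    filter_upwards [Ioo_mem_nhdsGT hδ] with μ hμ using hs μ hμ x hx v w) m (by omega) hm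
  rw [hform, hform, Finset.sum_add_distrib, Finset.sum_add_distrib, key]
  congr 1
  refine Finset.sum_congr rfl fun p _ => ?_
  rw [symm_snd hV (hF p.2) hx v w]

lemma WT_period {V : Set X} (hV : IsOpen V) {δ : ℝ} (hδ : 0 < δ) {f : ℝ → X → X}
    (hf : ContDiffOn ℝ ∞ (fun z : X × ℝ => f z.2 z.1) (V ×ˢ Metric.ball (0:ℝ) δ))
    (b : X →L[ℝ] X →L[ℝ] ℝ) {e x : X} (hxe : ∀ t : ℝ, x + t • e ∈ V) {c : ℝ}
    (hs : ∀ μ ∈ Ioo 0 δ, ∫ t in (0:ℝ)..1, b (f μ (x + t • e)) (fderiv ℝ (f μ) (x + t • e) e) = c)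
    (m : ℕ) (hm : 1 ≤ m) :
    ∫ t in (0:ℝ)..1, WT b f m (x + t • e) e = 0 := by
  have hline : Continuous (fun t : ℝ => x + t • e) := by fun_prop
  set K : Set X := (fun t : ℝ => x + t • e) '' Icc 0 1 with hKdef
  have hK : IsCompact K := isCompact_Icc.image hline
  have hKV : K ⊆ V := by rintro _ ⟨t, _, rfl⟩; exact hxe t
  have hE := HasExp.bilin mu_bigO b (exp_f hV hδ hf hK hKV (m+1)) (exp_df hV hδ hf hK hKV (m+1) e)
      (fun j => Fc_bigO hV hδ hf hK hKV j) (fun j => dFc_bigO hV hδ hf hK hKV j e)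
  have hE2 := HasExp.integral (c := fun t : ℝ => x + t • e)
    (a := fun j y => ∑ p ∈ Finset.HasAntidiagonal.antidiagonal j,
        b (Fc f p.1 y) (fderiv ℝ (Fc f p.2) y e)) hE
    (fun t ht => ⟨t, ht, rfl⟩) (by
      filter_upwards [Ioo_mem_nhdsGT hδ] with μ hμ
      have hfm : ContDiffOn ℝ ∞ (f μ) V :=
        hf.comp (g := fun z : X × ℝ => f z.2 z.1) (f := fun y : X => (y, μ)) (by fun_prop)
          (fun y hy => ⟨hy, by simpa [abs_of_pos hμ.1] using hμ.2⟩)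
      have hdm : ContDiffOn ℝ ∞ (fderiv ℝ (f μ)) V := hfm.fderiv_of_isOpen hV (by simp)
      have c1 : Continuous (fun t : ℝ => f μ (x + t • e)) :=
        hfm.continuousOn.comp_continuous hline hxe
      have c2 : Continuous (fun t : ℝ => fderiv ℝ (f μ) (x + t • e)) :=
        hdm.continuousOn.comp_continuous hline hxe
      exact ((b.continuous.comp c1).clm_apply (c2.clm_apply continuous_const)).intervalIntegrable 0 1)
    (fun j => by
      refine Continuous.intervalIntegrable ?_ 0 1
      refine continuous_finsetSum _ fun p _ => ?_
      have c1 : Continuous (fun t : ℝ => Fc f p.1 (x + t • e)) :=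
        (Fc_smooth hV hδ hf p.1).continuousOn.comp_continuous hline hxe
      have c2 : Continuous (fun t : ℝ => fderiv ℝ (Fc f p.2) (x + t • e) e) :=
        (dFc_cont hV hδ hf p.2 e).comp_continuous hline hxe
      exact (b.continuous.comp c1).clm_apply c2)
  have h0 : HasExp (𝓝[>] (0:ℝ)) (fun μ => μ) (m+1) (fun _ => (0:ℝ)) (fun _ _ => (0:ℝ)) := by
    unfold HasExp; simp only [smul_zero, Finset.sum_const_zero, sub_self]; exact isBigO_zero _ _
  have key := HasExp.unique_const (c := c) hE2 h0 (by
    filter_upwards [Ioo_mem_nhdsGT hδ] with μ hμ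
    rw [sub_zero]; exact hs μ hμ) m (by omega) hm
  rw [← key]
  congr 1
  ext t
  simp [WT]

end PartSix

section PartSeven

/-- the bilinear form `p · dq` -/
noncomputable def bform (d : ℕ) : RPhase d →L[ℝ] RPhase d →L[ℝ] ℝ :=
  ∑ i : Fin d, (((ContinuousLinearMap.proj i).comp
      (ContinuousLinearMap.fst ℝ (Fin d → ℝ) (Fin d → ℝ))) : RPhase d →L[ℝ] ℝ).smulRight
    (((ContinuousLinearMap.proj i).comp
      (ContinuousLinearMap.snd ℝ (Fin d → ℝ) (Fin d → ℝ))) : RPhase d →L[ℝ] ℝ)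

lemma bform_apply (d : ℕ) (x y : RPhase d) : bform d x y = ∑ i, x.1 i * y.2 i := by
  simp [bform, _root_.sum_apply]

lemma core_result (d : ℕ) (hd : 1 ≤ d)
    (c : Fin d → ℝ) (ρ : ℝ) (hρ : 0 < ρ)
    (B : Set (Fin d → ℝ)) (hB : B = Metric.ball c ρ)
    (μbar : ℝ) (hμbar : 0 < μbar)
    (f : ℝ → RPhase d → RPhase d)
    (hfa : AnalyticOnNhd ℝ (fun z : RPhase d × ℝ => f z.2 z.1)
      ((B ×ˢ (Set.univ : Set (Fin d → ℝ))) ×ˢ Metric.closedBall (0 : ℝ) μbar))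
    (hf0 : ∀ x : RPhase d, x.1 ∈ B → f 0 x = x)
    (hlift : ∀ μ : ℝ, |μ| ≤ μbar → ∀ x : RPhase d, x.1 ∈ B → ∀ e : Fin d → ℤ,
      f μ (x.1, x.2 + fun i => (e i : ℝ)) = ((f μ x).1, (f μ x).2 + fun i => (e i : ℝ)))
    (hsympl : ∀ μ : ℝ, |μ| ≤ μbar → ∀ x : RPhase d, x.1 ∈ B → ∀ w₁ w₂ : RPhase d,
      ∑ i, ((fderiv ℝ (f μ) x w₁).1 i * (fderiv ℝ (f μ) x w₂).2 i -
            (fderiv ℝ (f μ) x w₁).2 i * (fderiv ℝ (f μ) x w₂).1 i) =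
      ∑ i, (w₁.1 i * w₂.2 i - w₁.2 i * w₂.1 i))
    (hexact : ∀ μ : ℝ, |μ| ≤ μbar → ∀ γ : ℝ → RPhase d, ContDiff ℝ 1 γ →
      (∀ t, (γ t).1 ∈ B) → (γ 1).1 = (γ 0).1 →
      (∃ e : Fin d → ℤ, (γ 1).2 = (γ 0).2 + fun i => (e i : ℝ)) →
      loopAction d (fun t => f μ (γ t)) = loopAction d γ)
    (g : ℕ → RPhase d → RPhase d)
    (hg : ∀ k, 1 ≤ k → AnalyticOnNhd ℝ (g k) (B ×ˢ (Set.univ : Set (Fin d → ℝ))))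
    (hgP : FormalInterpolation d (B ×ˢ (Set.univ : Set (Fin d → ℝ))) f g) :
    ∀ k, 1 ≤ k → ∃ h : RPhase d → ℝ,
      (∀ x : RPhase d, ∀ e : Fin d → ℤ, h (x.1, x.2 + fun i => (e i : ℝ)) = h x) ∧
      ∀ x ∈ B ×ˢ (Set.univ : Set (Fin d → ℝ)),
        DifferentiableAt ℝ h x ∧
        (∀ i, (g k x).1 i = -fderiv ℝ h x (0, Pi.single i 1)) ∧
        (∀ i, (g k x).2 i = fderiv ℝ h x (Pi.single i 1, 0)) := by
  classical
  set V : Set (RPhase d) := B ×ˢ (Set.univ : Set (Fin d → ℝ)) with hVdef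
  have hBo : IsOpen B := hB ▸ Metric.isOpen_ball
  have hV : IsOpen V := hBo.prod isOpen_univ
  have hVc : Convex ℝ V := by
    refine Convex.prod ?_ convex_univ
    rw [hB]; exact convex_ball c ρ
  have hVmem : ∀ x : RPhase d, x ∈ V ↔ x.1 ∈ B := by intro x; simp [hVdef]
  let ev : (Fin d → ℤ) → RPhase d := fun e => (0, fun i => (e i : ℝ))
  let T : Set (RPhase d) := Set.range ev
  have hadd : ∀ (x : RPhase d) (e : Fin d → ℤ), (x.1, x.2 + fun i => (e i : ℝ)) = x + ev e := by
    intro x e; ext i <;> simp [ev]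
  have hVt : ∀ e ∈ T, ∀ x ∈ V, ∀ t : ℝ, x + t • e ∈ V := by
    rintro _ ⟨e, rfl⟩ x hx t
    rw [hVmem] at hx ⊢
    simpa [ev] using hx
  have hVe : ∀ e ∈ T, ∀ x ∈ V, x + e ∈ V := by
    intro e he x hx; simpa using hVt e he x hx 1
  have hf : ContDiffOn ℝ ∞ (fun z : RPhase d × ℝ => f z.2 z.1) (V ×ˢ Metric.ball (0:ℝ) μbar) :=
    (hfa.contDiffOn_of_completeSpace).mono
      (Set.prod_mono Subset.rfl Metric.ball_subset_closedBall)
  have hab : ∀ μ ∈ Ioo 0 μbar, |μ| ≤ μbar := fun μ hμ => by rw [abs_of_pos hμ.1]; exact hμ.2.le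
  -- normalised coefficients
  let g' : ℕ → RPhase d → RPhase d := fun k => if k = 0 then 0 else g k
  have hg'0 : g' 0 = 0 := by simp [g']
  have hg'k : ∀ k, 1 ≤ k → g' k = g k := fun k hk => by simp [g', show k ≠ 0 by omega]
  have hg' : ∀ k, ContDiffOn ℝ ∞ (g' k) V := by
    intro k
    rcases Nat.eq_zero_or_pos k with h | h
    · rw [h, hg'0]; exact contDiffOn_const
    · rw [hg'k k h]; exact (hg k h).contDiffOn_of_completeSpace
  have hI : ∀ m, ∀ x ∈ V, ∃ C, ∃ μ' > (0:ℝ), ∀ μ ∈ Ioo 0 μ', ∃ γ : ℝ → RPhase d, γ 0 = x ∧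
      (∀ t ∈ Icc (0:ℝ) 1, HasDerivAt γ (∑ k ∈ Finset.range (m+1), μ ^ k • g' k (γ t)) t) ∧
      ‖f μ x - γ 1‖ ≤ C * μ ^ (m+1) := by
    intro m x hx
    obtain ⟨C, _, μ', hμ', h⟩ := hgP m x hx
    refine ⟨C, μ', hμ', fun μ hμ => ?_⟩
    obtain ⟨γ, h0, h1, h2⟩ := h μ (by rw [abs_of_pos hμ.1]; exact hμ.2.le)
    refine ⟨γ, h0, fun t ht => ?_, by rw [abs_of_pos hμ.1] at h2; exact h2⟩
    have h3 := (h1 t ht).2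
    have e : ∑ k ∈ Finset.range (m+1), μ ^ k • g' k (γ t)
        = ∑ k ∈ Finset.Icc 1 m, μ ^ k • g k (γ t) := by
      rw [Finset.range_eq_Ico, Finset.sum_eq_sum_Ico_succ_bot (by omega), hg'0]
      simp only [Pi.zero_apply, smul_zero, zero_add]
      refine Finset.sum_congr rfl fun k hk => ?_
      rw [hg'k k (Finset.mem_Icc.1 hk).1]
    rw [e]; exact h3
  have hF : ∀ j, ∀ x ∈ V, Fc f j x = ∑ n ∈ Finset.range (j+1), fl g' n j x :=
    fun j x hx => Fc_eq hV hμbar hf hg' hg'0 hI j hx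
  have hgT : ∀ k, ∀ e ∈ T, ∀ x ∈ V, g' k (x + e) = g' k x := by
    intro k e he
    refine g_per hV hg'0 (fun j hj x hx => ?_) k
    rw [← hF j x hx, ← hF j (x + e) (hVe e he x hx)]
    refine Fc_per hV hμbar hf (hVe e he) (fun μ hμ x hx => ?_) j hj hx
    obtain ⟨e, rfl⟩ := he
    rw [← hadd, ← hadd]
    exact hlift μ (hab μ hμ) x ((hVmem x).1 hx) e
  set b := bform d with hb
  have hclosed : ∀ μ ∈ Ioo 0 μbar, ∀ x ∈ V, ∀ v w, b (fderiv ℝ (f μ) x v) (fderiv ℝ (f μ) x w)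
      - b (fderiv ℝ (f μ) x w) (fderiv ℝ (f μ) x v) = b v w - b w v := by
    intro μ hμ x hx v w
    have := hsympl μ (hab μ hμ) x ((hVmem x).1 hx) v w
    simp only [hb, bform_apply]
    rw [Finset.sum_sub_distrib, Finset.sum_sub_distrib] at this
    simp only [mul_comm] at this ⊢
    exact this
  have hper : ∀ e ∈ T, ∀ x ∈ V, ∀ μ ∈ Ioo 0 μbar,
      ∫ t in (0:ℝ)..1, b (f μ (x + t • e)) (fderiv ℝ (f μ) (x + t • e) e)
      = loopAction d (fun t : ℝ => x + t • e) := by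
    intro e he x hx μ hμ
    have h1 := hexact μ (hab μ hμ) (fun t : ℝ => x + t • e) (by fun_prop)
      (fun t => (hVmem _).1 (hVt e he x hx t))
      (by obtain ⟨e, rfl⟩ := he; simp [ev])
      (by obtain ⟨e, rfl⟩ := he; exact ⟨e, by ext i; simp [ev]⟩)
    rw [← h1]
    unfold loopAction
    congr 1
    ext t
    rw [hb, bform_apply]
    refine Finset.sum_congr rfl fun i _ => ?_
    have hfm : ContDiffOn ℝ ∞ (f μ) V :=
      hf.comp (g := fun z : RPhase d × ℝ => f z.2 z.1) (f := fun y : RPhase d => (y, μ)) (by fun_prop)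
        (fun y hy => ⟨hy, by simpa [abs_of_pos hμ.1] using hμ.2⟩)
    have h2 : HasDerivAt (fun t : ℝ => x + t • e) e t := by
      simpa using ((hasDerivAt_id t).smul_const e).const_add x
    have h3 := (diffAt_of hV hfm (hVt e he x hx t)).hasFDerivAt.comp_hasDerivAt t h2
    have h4 : HasDerivAt (fun u : ℝ => (f μ (x + u • e)).2 i) ((fderiv ℝ (f μ) (x + t • e) e).2 i) t :=
      (((ContinuousLinearMap.proj i).comp (ContinuousLinearMap.snd ℝ (Fin d → ℝ) (Fin d → ℝ))) :
        RPhase d →L[ℝ] ℝ).hasFDerivAt.comp_hasDerivAt t h3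
    rw [h4.deriv]
  have hW : ∀ m, 1 ≤ m → ExactP T V (fun x => ∑ n ∈ Finset.range (m+1), WF b g' n m x) := by
    intro m hm
    have h1 : ExactP T V (WT b f m) :=
      exactP_of hV hVc (WT_smooth hV hμbar hf b m)
        (fun a ha v w => WT_closed hV hμbar hf b hclosed m hm ha v w) hVt
        (fun e he x hx => WT_period hV hμbar hf b (hVt e he x hx) (hper e he x hx) m hm)
    exact h1.congr fun x hx => WF_total hV b hg' hg'0 hF m hx
  intro k hk
  obtain ⟨u, hu1, hu2, hu3⟩ := lie_exact hV b hg' hg'0 hgT hW k hk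
  have hgs := hg' k
  have hTk := hgT k
  rw [hg'k k hk] at hu3 hgs hTk
  refine ⟨fun x => if x.1 ∈ B then b x (g k x) - u x else 0, ?_, ?_⟩
  · intro x e
    by_cases hx : x.1 ∈ B
    · have hxV := (hVmem x).2 hx
      have hbx : b (x + ev e) = b x := by
        refine ContinuousLinearMap.ext fun y => ?_
        rw [hb, bform_apply, bform_apply]
        simp [ev]
      have he : ev e ∈ T := ⟨e, rfl⟩
      rw [hadd]
      have : (x + ev e).1 ∈ B := (hVmem _).1 (hVe _ he x hxV)
      simp only [this, hx, if_true]
      rw [hbx, hTk _ he x hxV, hu2 _ he x hxV]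
    · simp [hx]
  · intro x hx
    have h1 : HasFDerivAt (fun y => b y) b x := b.hasFDerivAt
    have h2 := (h1.clm_apply (diffAt_of hV hgs hx).hasFDerivAt).sub (diffAt_of hV hu1 hx).hasFDerivAt
    have h3 := h2.congr_of_eventuallyEq (f₁ := fun x => if x.1 ∈ B then b x (g k x) - u x else 0) (by
      filter_upwards [hV.mem_nhds hx] with y hy
      simp [(hVmem y).1 hy])
    have h4 : ∀ w, fderiv ℝ (fun x => if x.1 ∈ B then b x (g k x) - u x else 0) x w
        = b w (g k x) - b (g k x) w := by
      intro w
      rw [h3.fderiv, hu3 x hx]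
      simp [lieF]
      ring
    refine ⟨h3.differentiableAt, fun i => ?_, fun i => ?_⟩
    · rw [h4, hb, bform_apply, bform_apply]
      simp [Pi.single_apply]
    · rw [h4, hb, bform_apply, bform_apply]
      simp [Pi.single_apply]

end PartSeven

end Helpers

/-- **Formal interpolating vector field of an exact symplectic family is Hamiltonian
with periodic Hamiltonians.**  If `f_μ` is a jointly analytic family of lifts of maps of
`B × 𝕋^d` with `f₀ = id`, each `f_μ` symplectic and exact (preserving loop actions of
lifted loops), and `(g_k)` is the sequence of coefficient vector fields of the formal
interpolation, then every `g_k` is the Hamiltonian vector field `(−∂_q h_k, ∂_p h_k)` of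
a function `h_k` which is `1`-periodic in each angle. -/
theorem formal_vector_field_hamiltonian_periodic (d : ℕ) (hd : 1 ≤ d)
    (c : Fin d → ℝ) (ρ : ℝ) (hρ : 0 < ρ)
    (B : Set (Fin d → ℝ)) (hB : B = Metric.ball c ρ)
    (μbar : ℝ) (hμbar : 0 < μbar)
    (f : ℝ → RPhase d → RPhase d)
    (hfa : AnalyticOnNhd ℝ (fun z : RPhase d × ℝ => f z.2 z.1)
      ((B ×ˢ (Set.univ : Set (Fin d → ℝ))) ×ˢ Metric.closedBall (0 : ℝ) μbar))
    (hf0 : ∀ x : RPhase d, x.1 ∈ B → f 0 x = x)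
    (hlift : ∀ μ : ℝ, |μ| ≤ μbar → ∀ x : RPhase d, x.1 ∈ B → ∀ e : Fin d → ℤ,
      f μ (x.1, x.2 + fun i => (e i : ℝ)) = ((f μ x).1, (f μ x).2 + fun i => (e i : ℝ)))
    (hsympl : ∀ μ : ℝ, |μ| ≤ μbar → ∀ x : RPhase d, x.1 ∈ B → ∀ w₁ w₂ : RPhase d,
      ∑ i, ((fderiv ℝ (f μ) x w₁).1 i * (fderiv ℝ (f μ) x w₂).2 i -
            (fderiv ℝ (f μ) x w₁).2 i * (fderiv ℝ (f μ) x w₂).1 i) =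
      ∑ i, (w₁.1 i * w₂.2 i - w₁.2 i * w₂.1 i))
    (hexact : ∀ μ : ℝ, |μ| ≤ μbar → ∀ γ : ℝ → RPhase d, ContDiff ℝ 1 γ →
      (∀ t, (γ t).1 ∈ B) → (γ 1).1 = (γ 0).1 →
      (∃ e : Fin d → ℤ, (γ 1).2 = (γ 0).2 + fun i => (e i : ℝ)) →
      loopAction d (fun t => f μ (γ t)) = loopAction d γ)
    (g : ℕ → RPhase d → RPhase d)
    (hg : ∀ k, 1 ≤ k → AnalyticOnNhd ℝ (g k) (B ×ˢ (Set.univ : Set (Fin d → ℝ))))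
    (hgP : FormalInterpolation d (B ×ˢ (Set.univ : Set (Fin d → ℝ))) f g) :
    ∀ k, 1 ≤ k → ∃ h : RPhase d → ℝ,
      (∀ x : RPhase d, ∀ e : Fin d → ℤ, h (x.1, x.2 + fun i => (e i : ℝ)) = h x) ∧
      ∀ x ∈ B ×ˢ (Set.univ : Set (Fin d → ℝ)),
        DifferentiableAt ℝ h x ∧
        (∀ i, (g k x).1 i = -fderiv ℝ h x (0, Pi.single i 1)) ∧
        (∀ i, (g k x).2 i = fderiv ℝ h x (Pi.single i 1, 0)) := by
  exact core_result d hd c ρ hρ B hB μbar hμbar f hfa hf0 hlift hsympl hexact g hg hgP
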